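/- Let z ∈ (0, 1/2), let μ be the unique absolutely continuous f_z-invariant Borel probability measure on [0,1], and let φ : [0,1] → ℝ be Hölder continuous with ∫ φ dμ = 0. Set Φ_n = ∑_{j=0}^{n-1} φ ∘ f_z^j. Then there exists σ ≥ 0 such that the distribution of n^{−1/2} Φ_n under μ (i.e., the pushforward of μ by x ↦ n^{−1/2} Φ_n(x)) converges weakly to the Gaussian distribution N(0, σ²) as n → ∞. -/

import Mathlib

open MeasureTheory Set NNReal Filter

/-- The Liverani–Saussol–Vaienti (Pomeau–Manneville type) map with parameter `z`. -/
noncomputable def lsv (z : ℝ) (y : ℝ) : ℝ :=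
  if y < 1 / 2 then y * (1 + 2 ^ z * y ^ z) else 2 * y - 1

/-- The Birkhoff sum `Φ_n = ∑_{j=0}^{n-1} φ ∘ f_z^j`. -/
noncomputable def lsvBirkhoff (z : ℝ) (φ : ℝ → ℝ) (n : ℕ) (x : ℝ) : ℝ :=
  ∑ j ∈ Finset.range n, φ ((lsv z)^[j] x)

/-!
The first return map of `f = lsv z` to `[1/2, 1]` is conjugate, through the right branch, to the
full-branch map `G x = f^[κ x + 1] x` of `[0, 1]`, where `κ x + 1` is the number of steps `x` needs
to leave through the right branch. The inverse branches of `G` contract by `1/2`, their Jacobians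
`w k` are log-Lipschitz uniformly in `k`, and `‖w k‖` decays like `k ^ (-1 - 1/z)`; hence `κ` has a
finite second moment exactly when `z < 1/2`.

On the cone of functions with log-Hölder constant `a`, the transfer operator of `G` splits off a
definite constant and therefore contracts differences of equal mean geometrically. This yields a
positive invariant density, the ergodicity of `G`, and a solution of the Poisson equation: although
the Birkhoff sum of the observable over an excursion is unbounded, its image under the transfer
operator is Hölder. So the induced observable is, up to a coboundary, a square-integrable reverse
martingale difference.

For such differences along an ergodic map the central limit theorem follows from McLeish's argument:
the products `∏ (1 + i t Xⱼ / √n)` have integral one, and `∑ Xⱼ² / n` converges to a constant by the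
mean ergodic theorem. To pass from `G` to `f` the martingale is placed on the top levels of the
Kakutani tower over `G`; the tower measure projects to an ergodic `f`-invariant measure that
dominates Lebesgue measure on `[0, 1]`, which must be `μ`.
-/

section MeanErgodic
open scoped Topology ENNReal

variable {Ω : Type*} {mΩ : MeasurableSpace Ω} {ν : Measure Ω} {T : Ω → Ω} {v : Ω → ℝ}

lemma integral_comp_of_measurePreserving {E : Type*} [NormedAddCommGroup E] [NormedSpace ℝ E]
    (hT : MeasurePreserving T ν ν) {g : Ω → E} (hg : AEStronglyMeasurable g ν) :
    ∫ x, g (T x) ∂ν = ∫ x, g x ∂ν := by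
  rw [← integral_map hT.aemeasurable (by rwa [hT.map_eq]), hT.map_eq]

lemma memLp_birkhoffSum {p : ℝ≥0∞} (hT : MeasurePreserving T ν ν) (hv : MemLp v p ν) (n : ℕ) :
    MemLp (birkhoffSum T v n) p ν :=
  memLp_finsetSum _ fun j _ => hv.comp_measurePreserving (hT.iterate j)

lemma memLp_birkhoffAverage {p : ℝ≥0∞} (hT : MeasurePreserving T ν ν) (hv : MemLp v p ν) (n : ℕ) :
    MemLp (birkhoffAverage ℝ T v n) p ν :=
  (memLp_birkhoffSum hT hv n).const_smul (n : ℝ)⁻¹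

lemma integral_birkhoffSum (hT : MeasurePreserving T ν ν) (hv : Integrable v ν) (n : ℕ) :
    ∫ x, birkhoffSum T v n x ∂ν = n * ∫ x, v x ∂ν := by
  have hint (j : ℕ) : Integrable (fun x => v (T^[j] x)) ν :=
    (hT.iterate j).integrable_comp_of_integrable hv
  simp only [birkhoffSum]
  rw [integral_finsetSum _ fun j _ => hint j]
  simp [integral_comp_of_measurePreserving (hT.iterate _) hv.1]

lemma integral_birkhoffAverage (hT : MeasurePreserving T ν ν) (hv : Integrable v ν) {n : ℕ}
    (hn : n ≠ 0) : ∫ x, birkhoffAverage ℝ T v n x ∂ν = ∫ x, v x ∂ν := by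
  simp only [birkhoffAverage, smul_eq_mul]
  rw [integral_const_mul, integral_birkhoffSum hT hv, inv_mul_cancel_left₀ (by exact_mod_cast hn)]

lemma coeFn_birkhoffAverage_compMeasurePreserving (hT : MeasurePreserving T ν ν)
    (V : Lp ℝ 2 ν) (n : ℕ) :
    (birkhoffAverage ℝ (Lp.compMeasurePreserving T hT) id n V : Lp ℝ 2 ν)
      =ᵐ[ν] birkhoffAverage ℝ T V n := by
  have hiter (j : ℕ) : ((Lp.compMeasurePreserving T hT)^[j] V : Lp ℝ 2 ν) =ᵐ[ν] V ∘ T^[j] := by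
    rw [Lp.compMeasurePreserving_iterate]
    exact Lp.coeFn_compMeasurePreserving _ _
  refine (Lp.coeFn_smul _ _).trans ?_
  filter_upwards [Lp.coeFn_finsetSum (Finset.range n)
    fun j => ((Lp.compMeasurePreserving T hT)^[j] V : Lp ℝ 2 ν), ae_all_iff.2 hiter] with x hsum hx
  simp only [Pi.smul_apply, hsum, Finset.sum_apply, hx, Function.comp_apply, birkhoffAverage,
    birkhoffSum, id_eq]

/- The projection onto the invariant functions in von Neumann's theorem is a constant by
ergodicity, and integrating identifies the constant. -/
theorem tendsto_eLpNorm_birkhoffAverage_sub_integral [IsProbabilityMeasure ν] (hT : Ergodic T ν)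
    (hv : MemLp v 2 ν) :
    Tendsto (fun n => eLpNorm (fun x => birkhoffAverage ℝ T v n x - ∫ y, v y ∂ν) 2 ν)
      atTop (𝓝 0) := by
  have hmp := hT.toMeasurePreserving
  let U : Lp ℝ 2 ν →L[ℝ] Lp ℝ 2 ν :=
    (Lp.compMeasurePreservingₗᵢ ℝ T hmp).toContinuousLinearMap
  obtain ⟨P, hUP, hlim⟩ : ∃ P : Lp ℝ 2 ν, Lp.compMeasurePreserving T hmp P = P ∧
      Tendsto (fun n => birkhoffAverage ℝ U id n (hv.toLp v)) atTop (𝓝 P) :=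
    ⟨_, ((U.eqLocus (1 : Lp ℝ 2 ν →L[ℝ] Lp ℝ 2 ν)).orthogonalProjectionOnto (hv.toLp v)).2,
      U.tendsto_birkhoffAverage_orthogonalProjection
        (LinearIsometry.norm_toContinuousLinearMap_le _) _⟩
  obtain ⟨c, hPc⟩ : ∃ c, P =ᵐ[ν] Function.const Ω c :=
    hT.ae_eq_const_of_ae_eq_comp_ae (Lp.aestronglyMeasurable P)
      ((Lp.coeFn_compMeasurePreserving P hmp).symm.trans (by rw [hUP]))
  have havg (n : ℕ) :
      (birkhoffAverage ℝ U id n (hv.toLp v) : Lp ℝ 2 ν) =ᵐ[ν] birkhoffAverage ℝ T v n :=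
    (coeFn_birkhoffAverage_compMeasurePreserving hmp _ n).trans
      (hmp.quasiMeasurePreserving.birkhoffAverage_ae_eq_of_ae_eq ℝ hv.coeFn_toLp n)
  have htendsto : Tendsto (fun n => eLpNorm (birkhoffAverage ℝ T v n - fun _ => c) 2 ν)
      atTop (𝓝 0) :=
    ((Lp.tendsto_Lp_iff_tendsto_eLpNorm' _ _).1 hlim).congr fun n =>
      eLpNorm_congr_ae ((havg n).sub hPc)
  have hint : Tendsto (fun n => ∫ x, birkhoffAverage ℝ T v n x ∂ν) atTop (𝓝 (∫ _, c ∂ν)) := by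
    refine tendsto_integral_of_L1' _ (integrable_const c).1 (.of_forall fun n =>
      (memLp_birkhoffAverage hmp hv n).integrable one_le_two) ?_
    exact tendsto_of_tendsto_of_tendsto_of_le_of_le tendsto_const_nhds htendsto (fun _ => bot_le)
      fun n => eLpNorm_le_eLpNorm_of_exponent_le one_le_two
        ((memLp_birkhoffAverage hmp hv n).1.sub aestronglyMeasurable_const)
  have hc : ∫ y, v y ∂ν = c := by
    refine (tendsto_nhds_unique (tendsto_const_nhds.congr' ?_) hint).trans (by simp)
    filter_upwards [eventually_ne_atTop 0] with n hn
    exact (integral_birkhoffAverage hmp (hv.integrable one_le_two) hn).symm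
  rw [hc]
  exact htendsto

lemma integral_norm_le_toReal_eLpNorm_two [IsProbabilityMeasure ν] {E : Type*}
    [NormedAddCommGroup E] {g : Ω → E} (hg : MemLp g 2 ν) :
    ∫ x, ‖g x‖ ∂ν ≤ (eLpNorm g 2 ν).toReal := by
  rw [integral_norm_eq_lintegral_enorm hg.1, ← eLpNorm_one_eq_lintegral_enorm]
  exact ENNReal.toReal_mono hg.2.ne (eLpNorm_le_eLpNorm_of_exponent_le one_le_two hg.1)

lemma tendsto_integral_abs_birkhoffAverage_sub_integral [IsProbabilityMeasure ν]
    (hT : Ergodic T ν) (hv : MemLp v 2 ν) :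
    Tendsto (fun n => ∫ x, |birkhoffAverage ℝ T v n x - ∫ y, v y ∂ν| ∂ν) atTop (𝓝 0) := by
  have hlim := (ENNReal.tendsto_toReal ENNReal.zero_ne_top).comp
    (tendsto_eLpNorm_birkhoffAverage_sub_integral hT hv)
  exact squeeze_zero (fun n => integral_nonneg fun x => abs_nonneg _)
    (fun n => integral_norm_le_toReal_eLpNorm_two
      ((memLp_birkhoffAverage hT.toMeasurePreserving hv n).sub (memLp_const _))) hlim

end MeanErgodic

section ExponentialEstimates
open Complex (I)

lemma norm_one_add_mul_I_le (x : ℝ) : ‖(1 : ℂ) + x * I‖ ≤ Real.exp (x ^ 2 / 2) := by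
  have hsq : ‖(1 : ℂ) + x * I‖ ^ 2 = x ^ 2 + 1 := by
    rw [← Complex.normSq_eq_norm_sq, Complex.normSq_apply]
    simp
    ring
  refine le_of_sq_le_sq ?_ (Real.exp_pos _).le
  rw [hsq, ← Real.exp_nat_mul, Nat.cast_ofNat, mul_div_cancel₀ _ (two_ne_zero' ℝ)]
  exact Real.add_one_le_exp _

lemma norm_prod_one_add_mul_I_le {ι : Type*} (s : Finset ι) (x : ι → ℝ) :
    ‖∏ j ∈ s, ((1 : ℂ) + x j * I)‖ ≤ Real.exp ((∑ j ∈ s, x j ^ 2) / 2) := by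
  rw [norm_prod, Finset.sum_div, Real.exp_sum]
  exact Finset.prod_le_prod (fun _ _ => norm_nonneg _) fun j _ => norm_one_add_mul_I_le _

lemma norm_exp_mul_I_sub_le {x : ℝ} (hx : |x| ≤ 1) :
    ‖Complex.exp (x * I) - (1 + x * I) * Real.exp (-(x ^ 2 / 2))‖ ≤ 2 * |x| ^ 3 := by
  have hx0 := abs_nonneg x
  have hnorm : ‖(x : ℂ) * I‖ = |x| := by simp
  set R : ℝ := Real.exp (-(x ^ 2 / 2)) - 1 - -(x ^ 2 / 2) with hR
  set S : ℂ := Complex.exp (x * I) - ∑ k ∈ Finset.range 3, ((x : ℂ) * I) ^ k / k.factorial with hS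
  have hSx : ‖S‖ ≤ |x| ^ 3 := by
    refine (Complex.exp_bound (hnorm.trans_le hx) (n := 3) (by norm_num)).trans ?_
    rw [hnorm]
    norm_num [Nat.factorial]
    nlinarith [pow_nonneg hx0 3]
  have hRx : |R| ≤ |x| ^ 3 / 4 := by
    have hsq : x ^ 2 ≤ 1 := by rw [← sq_abs]; exact pow_le_one₀ hx0 hx
    calc |R| ≤ (-(x ^ 2 / 2)) ^ 2 := Real.abs_exp_sub_one_sub_id_le <| by
          rw [abs_neg, abs_of_nonneg (by positivity)]; linarith
      _ = |x| ^ 3 * |x| / 4 := by rw [neg_sq, ← sq_abs x]; ring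
      _ ≤ |x| ^ 3 / 4 := by gcongr; exact mul_le_of_le_one_right (by positivity) hx
  have hexpand : Complex.exp (x * I) - (1 + x * I) * Real.exp (-(x ^ 2 / 2))
      = S + (x ^ 3 / 2 : ℝ) * I - (1 + x * I) * R := by
    rw [hS, hR]
    simp only [Finset.sum_range_succ, Finset.sum_range_zero, mul_pow, Complex.I_sq]
    push_cast [Nat.factorial]
    ring
  have hone : ‖(1 : ℂ) + x * I‖ ≤ 2 := by
    refine (norm_add_le _ _).trans ?_
    rw [hnorm, norm_one]
    linarith
  calc _ ≤ ‖S‖ + ‖((x ^ 3 / 2 : ℝ) : ℂ) * I‖ + ‖(1 + x * I) * (R : ℂ)‖ := by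
        rw [hexpand]
        exact (norm_sub_le _ _).trans (add_le_add_left (norm_add_le _ _) _)
    _ ≤ |x| ^ 3 + |x| ^ 3 / 2 + 2 * (|x| ^ 3 / 4) := by
        gcongr
        · simp
        · rw [norm_mul, Complex.norm_real, Real.norm_eq_abs]
          gcongr
    _ = 2 * |x| ^ 3 := by ring

lemma norm_prod_sub_prod_le {ι : Type*} {s : Finset ι} {a b : ι → ℂ} (ha : ∀ j ∈ s, ‖a j‖ ≤ 1)
    (hb : ∀ j ∈ s, ‖b j‖ ≤ 1) :
    ‖∏ j ∈ s, a j - ∏ j ∈ s, b j‖ ≤ ∑ j ∈ s, ‖a j - b j‖ := by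
  classical
  induction s using Finset.induction_on with
  | empty => simp
  | insert i s hi ih =>
    rw [Finset.forall_mem_insert] at ha hb
    rw [Finset.prod_insert hi, Finset.prod_insert hi, Finset.sum_insert hi]
    have hprod : ‖∏ j ∈ s, b j‖ ≤ 1 := by
      rw [norm_prod]
      exact Finset.prod_le_one (fun _ _ => norm_nonneg _) hb.2
    calc ‖a i * ∏ j ∈ s, a j - b i * ∏ j ∈ s, b j‖
        = ‖(a i - b i) * ∏ j ∈ s, b j + a i * (∏ j ∈ s, a j - ∏ j ∈ s, b j)‖ := by ring_nf
      _ ≤ ‖a i - b i‖ * ‖∏ j ∈ s, b j‖ + ‖a i‖ * ‖∏ j ∈ s, a j - ∏ j ∈ s, b j‖ :=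
          (norm_add_le _ _).trans (by rw [norm_mul, norm_mul])
      _ ≤ ‖a i - b i‖ * 1 + 1 * ∑ j ∈ s, ‖a j - b j‖ := by gcongr; exacts [ha.1, ih ha.2 hb.2]
      _ = _ := by ring

lemma norm_exp_sum_mul_I_sub_prod_le {ι : Type*} {s : Finset ι} {x : ι → ℝ}
    (hx : ∀ j ∈ s, |x j| ≤ 1) :
    ‖Complex.exp ((∑ j ∈ s, x j : ℝ) * I)
        - (∏ j ∈ s, (1 + x j * I)) * Real.exp (-((∑ j ∈ s, x j ^ 2) / 2))‖
      ≤ ∑ j ∈ s, 2 * |x j| ^ 3 := by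
  have hexp : Complex.exp ((∑ j ∈ s, x j : ℝ) * I) = ∏ j ∈ s, Complex.exp (x j * I) := by
    rw [← Complex.exp_sum, Complex.ofReal_sum, Finset.sum_mul]
  have hprod : (∏ j ∈ s, (1 + x j * I)) * Real.exp (-((∑ j ∈ s, x j ^ 2) / 2))
      = ∏ j ∈ s, (1 + x j * I) * (Real.exp (-(x j ^ 2 / 2)) : ℂ) := by
    rw [Finset.prod_mul_distrib, Finset.sum_div, ← Finset.sum_neg_distrib, Real.exp_sum,
      Complex.ofReal_prod]
  rw [hexp, hprod]
  refine (norm_prod_sub_prod_le (fun j _ => ?_) (fun j _ => ?_)).trans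
    (Finset.sum_le_sum fun j hj => norm_exp_mul_I_sub_le (hx j hj))
  · exact (Complex.norm_exp_ofReal_mul_I _).le
  · rw [norm_mul, Complex.norm_real, Real.norm_eq_abs, Real.abs_exp, Real.exp_neg,
      ← div_eq_mul_inv, div_le_one (Real.exp_pos _)]
    exact norm_one_add_mul_I_le _

lemma abs_exp_neg_sub_exp_neg_le {a b : ℝ} (ha : 0 ≤ a) (hb : 0 ≤ b) :
    |Real.exp (-a) - Real.exp (-b)| ≤ |a - b| := by
  wlog h : a ≤ b generalizing a b with H
  · rw [abs_sub_comm, abs_sub_comm a b]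
    exact H hb ha (le_of_not_ge h)
  rw [abs_of_nonneg (sub_nonneg.2 (Real.exp_le_exp.2 (neg_le_neg h))), abs_of_nonpos (by linarith)]
  calc Real.exp (-a) - Real.exp (-b) = Real.exp (-a) * (1 - Real.exp (-(b - a))) := by
        rw [mul_sub, mul_one, ← Real.exp_add]; ring_nf
    _ ≤ Real.exp (-a) * (b - a) :=
        mul_le_mul_of_nonneg_left (by linarith [Real.add_one_le_exp (-(b - a))])
          (Real.exp_pos _).le
    _ ≤ b - a := mul_le_of_le_one_left (by linarith) (Real.exp_le_one_iff.2 (by linarith))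
    _ = -(a - b) := by ring

/- McLeish's comparison: the product `∏ (1 + i xⱼ)` integrates to one along martingale
differences, and `exp (i ∑ xⱼ)` is close to it times a constant once `∑ xⱼ²` is close to `q`. -/
lemma norm_exp_sum_mul_I_sub_prod_mul_exp_le {ι : Type*} {s : Finset ι} {x : ι → ℝ} {q : ℝ}
    (hx : ∀ j ∈ s, |x j| ≤ 1) (hq : 0 ≤ q) :
    ‖Complex.exp ((∑ j ∈ s, x j : ℝ) * I) - (∏ j ∈ s, (1 + x j * I)) * Real.exp (-(q / 2))‖
      ≤ ∑ j ∈ s, 2 * |x j| ^ 3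
        + Real.exp ((∑ j ∈ s, x j ^ 2) / 2) * (|∑ j ∈ s, x j ^ 2 - q| / 2) := by
  set Q := ∑ j ∈ s, x j ^ 2
  have : 0 ≤ Q := Finset.sum_nonneg fun j _ => sq_nonneg _
  refine (norm_sub_le_norm_sub_add_norm_sub _
    ((∏ j ∈ s, ((1 : ℂ) + x j * I)) * Real.exp (-(Q / 2))) _).trans
    (add_le_add (norm_exp_sum_mul_I_sub_prod_le hx) ?_)
  rw [← mul_sub, norm_mul, ← Complex.ofReal_sub, Complex.norm_real, Real.norm_eq_abs]
  gcongr
  · exact norm_prod_one_add_mul_I_le s x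
  · refine (abs_exp_neg_sub_exp_neg_le (by positivity) (by positivity)).trans_eq ?_
    rw [← _root_.sub_div, abs_div, abs_two]

lemma norm_exp_sum_mul_I_sub_prod_mul_exp_le_of_abs_le {ι : Type*} {s : Finset ι} {x : ι → ℝ}
    {q δ : ℝ} (hx : ∀ j ∈ s, |x j| ≤ δ) (hδ : δ ≤ 1) (hq : 0 ≤ q) :
    ‖Complex.exp ((∑ j ∈ s, x j : ℝ) * I) - (∏ j ∈ s, (1 + x j * I)) * Real.exp (-(q / 2))‖
      ≤ s.card * (2 * δ ^ 3) + Real.exp (s.card * δ ^ 2 / 2) * (|∑ j ∈ s, x j ^ 2 - q| / 2) := by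
  refine (norm_exp_sum_mul_I_sub_prod_mul_exp_le (fun j hj => (hx j hj).trans hδ) hq).trans ?_
  gcongr
  · refine (Finset.sum_le_card_nsmul _ _ (2 * δ ^ 3) fun j hj => ?_).trans_eq (nsmul_eq_mul _ _)
    gcongr
    exact hx j hj
  · refine (Finset.sum_le_card_nsmul _ _ (δ ^ 2) fun j hj => ?_).trans_eq (nsmul_eq_mul _ _)
    rw [← sq_abs]
    gcongr
    exact hx j hj

end ExponentialEstimates

section BoundedMartingaleDifferences
open scoped Topology ENNReal
open Complex (I)

variable {Ω : Type*} {mΩ : MeasurableSpace Ω} {ν : Measure Ω} {T : Ω → Ω} {m : Ω → ℝ}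

lemma aestronglyMeasurable_comp_comap {E : Type*} [TopologicalSpace E] {g : Ω → E}
    (hT : MeasurePreserving T ν ν) (hg : AEStronglyMeasurable g ν) :
    AEStronglyMeasurable[mΩ.comap T] (g ∘ T) ν :=
  ⟨hg.mk g ∘ T, hg.stronglyMeasurable_mk.comp_measurable (comap_measurable T),
    hT.quasiMeasurePreserving.ae_eq_comp hg.ae_eq_mk⟩

lemma integral_smul_comp_eq_zero [IsFiniteMeasure ν] {E : Type*} [NormedAddCommGroup E]
    [NormedSpace ℝ E] [CompleteSpace E] {g : Ω → E} (hT : MeasurePreserving T ν ν)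
    (hmi : Integrable m ν) (hm : ν[m | mΩ.comap T] =ᵐ[ν] 0) (hg : AEStronglyMeasurable g ν)
    (hmg : Integrable (fun x => m x • g (T x)) ν) : ∫ x, m x • g (T x) ∂ν = 0 := by
  rw [← integral_condExp hT.measurable.comap_le]
  refine integral_eq_zero_of_ae ?_
  filter_upwards [hm, condExp_smul_of_aestronglyMeasurable_right hmi hmg
    (aestronglyMeasurable_comp_comap hT hg)] with x hx hpull
  exact hpull.trans (by simp [hx])

lemma ae_forall_iterate (hT : MeasurePreserving T ν ν) {p : Ω → Prop} (hp : ∀ᵐ x ∂ν, p x) :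
    ∀ᵐ x ∂ν, ∀ j, p (T^[j] x) :=
  ae_all_iff.2 fun j => (hT.iterate j).quasiMeasurePreserving.ae hp

lemma aestronglyMeasurable_prod_one_add_mul_I (hT : MeasurePreserving T ν ν)
    (hm : AEStronglyMeasurable m ν) (s : ℝ) (n : ℕ) :
    AEStronglyMeasurable (fun x => ∏ j ∈ Finset.range n, (1 + (s * m (T^[j] x) : ℝ) * I)) ν := by
  refine Finset.aestronglyMeasurable_fun_prod _ fun j _ => ?_
  have hj : AEStronglyMeasurable (fun x => m (T^[j] x)) ν :=
    hm.comp_measurePreserving (hT.iterate j)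
  exact aestronglyMeasurable_const.add
    ((Complex.continuous_ofReal.comp_aestronglyMeasurable (hj.const_mul s)).mul_const I)

lemma integral_prod_one_add_mul_I [IsProbabilityMeasure ν] {K : ℝ} (hT : MeasurePreserving T ν ν)
    (hmm : AEStronglyMeasurable m ν) (hK : ∀ᵐ x ∂ν, |m x| ≤ K)
    (hm : ν[m | mΩ.comap T] =ᵐ[ν] 0) (s : ℝ) (n : ℕ) :
    ∫ x, ∏ j ∈ Finset.range n, (1 + (s * m (T^[j] x) : ℝ) * I) ∂ν = 1 := by
  set P : ℕ → Ω → ℂ := fun n x => ∏ j ∈ Finset.range n, (1 + (s * m (T^[j] x) : ℝ) * I)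
  have hPm (n : ℕ) : AEStronglyMeasurable (P n) ν :=
    aestronglyMeasurable_prod_one_add_mul_I hT hmm s n
  have hPbd (n : ℕ) : ∀ᵐ x ∂ν, ‖P n x‖ ≤ (1 + |s| * K) ^ n := by
    filter_upwards [ae_forall_iterate hT hK] with x hx
    rw [norm_prod, ← Finset.card_range n, ← Finset.prod_const, Finset.card_range]
    refine Finset.prod_le_prod (fun _ _ => norm_nonneg _) fun j _ => (norm_add_le _ _).trans ?_
    simp only [norm_one, norm_mul, Complex.norm_I, Complex.norm_real, Real.norm_eq_abs, mul_one]
    gcongr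
    exact hx j
  have hmi : Integrable m ν := .of_bound hmm K hK
  change ∫ x, P n x ∂ν = 1
  induction n with
  | zero => simp [P]
  | succ n ih =>
    have hPTm : AEStronglyMeasurable (fun x => P n (T x)) ν := (hPm n).comp_measurePreserving hT
    have hPTbd : ∀ᵐ x ∂ν, ‖P n (T x)‖ ≤ (1 + |s| * K) ^ n := hT.quasiMeasurePreserving.ae (hPbd n)
    have hsplit (x : Ω) : P (n + 1) x = P n (T x) + s * I * (m x • P n (T x)) := by
      simp only [P, Finset.prod_range_succ', Function.iterate_succ_apply,
        Function.iterate_zero_apply, Complex.real_smul]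
      push_cast
      ring
    have hint : Integrable (fun x => m x • P n (T x)) ν := hmi.smul_bdd _ hPTm hPTbd
    simp_rw [hsplit]
    rw [integral_add (.of_bound hPTm _ hPTbd) (hint.const_mul _), integral_const_mul,
      integral_smul_comp_eq_zero hT hmi hm (hPm n) hint, mul_zero, add_zero,
      integral_comp_of_measurePreserving hT (hPm n), ih]

lemma integrable_exp_mul_I [IsFiniteMeasure ν] {X : Ω → ℝ} (hX : AEStronglyMeasurable X ν) :
    Integrable (fun x => Complex.exp (X x * I)) ν :=
  .of_bound (Complex.continuous_exp.comp_aestronglyMeasurable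
    ((Complex.continuous_ofReal.comp_aestronglyMeasurable hX).mul_const I)) 1
    (.of_forall fun _ => (Complex.norm_exp_ofReal_mul_I _).le)

lemma norm_integral_exp_birkhoffSum_sub_le [IsProbabilityMeasure ν] {K s q : ℝ}
    (hT : MeasurePreserving T ν ν) (hmm : AEStronglyMeasurable m ν) (hK : ∀ᵐ x ∂ν, |m x| ≤ K)
    (hm : ν[m | mΩ.comap T] =ᵐ[ν] 0) (hs : |s| * K ≤ 1) (hq : 0 ≤ q) (n : ℕ) :
    ‖∫ x, Complex.exp ((s * birkhoffSum T m n x : ℝ) * I) ∂ν - Real.exp (-(q / 2))‖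
      ≤ n * (2 * (|s| * K) ^ 3) + Real.exp (n * (|s| * K) ^ 2 / 2)
        * ((∫ x, |s ^ 2 * birkhoffSum T (fun y => m y ^ 2) n x - q| ∂ν) / 2) := by
  have hSm : AEStronglyMeasurable (birkhoffSum T m n) ν :=
    Finset.aestronglyMeasurable_fun_sum _ fun j _ => hmm.comp_measurePreserving (hT.iterate j)
  have hexp := integrable_exp_mul_I (hSm.const_mul s)
  have hQ : Integrable (fun x => s ^ 2 * birkhoffSum T (fun y => m y ^ 2) n x - q) ν := by
    have hsq : MemLp (fun y => m y ^ 2) 1 ν := by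
      refine .of_bound (hmm.pow 2) (K ^ 2) (hK.mono fun x hx => ?_)
      rw [norm_pow, Real.norm_eq_abs]
      gcongr
    exact ((memLp_one_iff_integrable.1 (memLp_birkhoffSum hT hsq n)).const_mul _).sub
      (integrable_const _)
  have hprod_int := integral_prod_one_add_mul_I hT hmm hK hm s n
  have hprod : Integrable (fun x => ∏ j ∈ Finset.range n, (1 + (s * m (T^[j] x) : ℝ) * I)) ν :=
    .of_integral_ne_zero (by rw [hprod_int]; exact one_ne_zero)
  rw [← one_mul ((Real.exp _ : ℝ) : ℂ), ← hprod_int, ← integral_mul_const,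
    ← integral_sub hexp (hprod.mul_const _)]
  have hE : Integrable (fun x => Real.exp (n * (|s| * K) ^ 2 / 2) *
      (|s ^ 2 * birkhoffSum T (fun y => m y ^ 2) n x - q| / 2)) ν :=
    (hQ.abs.div_const 2).const_mul _
  refine (norm_integral_le_of_norm_le
    ((integrable_const (n * (2 * (|s| * K) ^ 3))).add hE) ?_).trans_eq ?_
  · filter_upwards [ae_forall_iterate hT hK] with x hx
    simp only [Pi.add_apply]
    have hsm (j : ℕ) : |s * m (T^[j] x)| ≤ |s| * K := by rw [abs_mul]; gcongr; exact hx j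
    have hmul : s * birkhoffSum T m n x = ∑ j ∈ Finset.range n, s * m (T^[j] x) :=
      Finset.mul_sum ..
    have hmul_sq : s ^ 2 * birkhoffSum T (fun y => m y ^ 2) n x
        = ∑ j ∈ Finset.range n, (s * m (T^[j] x)) ^ 2 := by
      simp only [birkhoffSum, Finset.mul_sum, mul_pow]
    rw [hmul, hmul_sq]
    simpa only [Finset.card_range] using norm_exp_sum_mul_I_sub_prod_mul_exp_le_of_abs_le
      (s := Finset.range n) (fun j _ => hsm j) hs hq
  · simp [integral_add (integrable_const _) hE, integral_const_mul, integral_div]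

lemma tendsto_inv_sqrt_atTop : Tendsto (fun n : ℕ => (√n)⁻¹) atTop (𝓝 0) :=
  tendsto_inv_atTop_zero.comp (Real.tendsto_sqrt_atTop.comp tendsto_natCast_atTop_atTop)

theorem tendsto_integral_exp_birkhoffSum_of_bounded [IsProbabilityMeasure ν] {K : ℝ}
    (hT : Ergodic T ν) (hmm : AEStronglyMeasurable m ν) (hK : ∀ᵐ x ∂ν, |m x| ≤ K)
    (hm : ν[m | mΩ.comap T] =ᵐ[ν] 0) (t : ℝ) :
    Tendsto (fun n : ℕ => ∫ x, Complex.exp ((t * (√n)⁻¹ * birkhoffSum T m n x : ℝ) * I) ∂ν) atTop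
      (𝓝 (Real.exp (-(t ^ 2 * ∫ x, m x ^ 2 ∂ν) / 2) : ℝ)) := by
  set V := ∫ x, m x ^ 2 ∂ν
  have hsq : MemLp (fun y => m y ^ 2) 2 ν := by
    refine .of_bound (hmm.pow 2) (K ^ 2) (hK.mono fun x hx => ?_)
    rw [norm_pow, Real.norm_eq_abs]
    gcongr
  have hsqrt := tendsto_inv_sqrt_atTop
  have herg : Tendsto (fun n : ℕ =>
      ∫ x, |birkhoffAverage ℝ T (fun y => m y ^ 2) n x - V| ∂ν) atTop (𝓝 0) :=
    tendsto_integral_abs_birkhoffAverage_sub_integral hT hsq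
  rw [tendsto_iff_norm_sub_tendsto_zero]
  have hbound := (hsqrt.const_mul (2 * (|t| * K) ^ 3)).add
    (herg.const_mul (Real.exp ((|t| * K) ^ 2 / 2) * (t ^ 2 / 2)))
  rw [mul_zero, mul_zero, add_zero] at hbound
  refine squeeze_zero' (.of_forall fun n => norm_nonneg _) ?_ hbound
  have hsmall : ∀ᶠ n : ℕ in atTop, |t| * K * (√n)⁻¹ ≤ 1 :=
    (hsqrt.const_mul (|t| * K)).eventually_le_const (by simp)
  filter_upwards [hsmall, eventually_gt_atTop 0] with n hn hn0
  have hsq_n : (√(n : ℝ))⁻¹ ^ 2 = (n : ℝ)⁻¹ := by rw [inv_pow, Real.sq_sqrt n.cast_nonneg]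
  have hn0' : (n : ℝ) ≠ 0 := by positivity
  have habs : |t * (√n)⁻¹| * K = |t| * K * (√n)⁻¹ := by
    rw [abs_mul, abs_of_nonneg (by positivity : 0 ≤ (√(n : ℝ))⁻¹)]
    ring
  have hV : 0 ≤ t ^ 2 * V := mul_nonneg (sq_nonneg _) (integral_nonneg fun _ => sq_nonneg _)
  rw [neg_div]
  refine (norm_integral_exp_birkhoffSum_sub_le hT.toMeasurePreserving hmm hK hm
    (habs.trans_le hn) hV n).trans_eq ?_
  have hint (x : Ω) : |(t * (√n)⁻¹) ^ 2 * birkhoffSum T (fun y => m y ^ 2) n x - t ^ 2 * V|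
      = t ^ 2 * |birkhoffAverage ℝ T (fun y => m y ^ 2) n x - V| := by
    rw [mul_pow, hsq_n, mul_assoc, ← mul_sub, abs_mul, abs_sq]
    rfl
  simp only [hint, habs]
  rw [integral_const_mul, mul_pow _ _ 3, mul_pow _ _ 2, pow_succ (√(n : ℝ))⁻¹, hsq_n]
  field_simp

end BoundedMartingaleDifferences

section MartingaleCLT
open scoped Topology ENNReal
open Complex (I)
open ProbabilityTheory (gaussianReal)

variable {Ω : Type*} {m₀ mΩ : MeasurableSpace Ω} {ν : Measure Ω} {T : Ω → Ω} {m : Ω → ℝ}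

lemma exists_bounded_condExp_eq_zero_eLpNorm_sub_le [IsFiniteMeasure ν]
    (hm₀ : m₀ ≤ mΩ) (hm2 : MemLp m 2 ν) (hm : ν[m | m₀] =ᵐ[ν] 0) {ε : ℝ≥0∞} (hε : ε ≠ 0) :
    ∃ u : Ω → ℝ, AEStronglyMeasurable u ν ∧ (∃ K, ∀ᵐ x ∂ν, |u x| ≤ K) ∧ ν[u | m₀] =ᵐ[ν] 0 ∧
      eLpNorm (m - u) 2 ν ≤ ε := by
  obtain ⟨g, hgε, hg2⟩ :=
    hm2.exists_simpleFunc_eLpNorm_sub_lt ENNReal.ofNat_ne_top (ENNReal.half_pos hε).ne'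
  let G : Ω → ℝ := ⇑g
  have hgi : Integrable G ν := hg2.integrable one_le_two
  have hmi : Integrable m ν := hm2.integrable one_le_two
  obtain ⟨K, hK⟩ : ∃ K, ∀ x, ‖g x‖ ≤ K := g.exists_forall_norm_le
  have hgK : ∀ᵐ x ∂ν, |g x| ≤ K := .of_forall hK
  refine ⟨G - ν[G | m₀], hgi.1.sub integrable_condExp.1, ⟨K + K, ?_⟩, ?_, ?_⟩
  · filter_upwards [hgK, ae_bdd_abs_condExp_of_ae_bdd_abs hgK] with x h₁ h₂
    exact (abs_sub _ _).trans (add_le_add h₁ h₂)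
  · refine (condExp_sub hgi integrable_condExp m₀).trans ?_
    rw [condExp_of_stronglyMeasurable hm₀ stronglyMeasurable_condExp integrable_condExp, sub_self]
  · have hsub : m - (G - ν[G | m₀]) =ᵐ[ν] (m - G) - ν[m - G | m₀] := by
      filter_upwards [hm, condExp_sub hmi hgi m₀] with x hx hsubx
      simp only [Pi.sub_apply, Pi.zero_apply, hsubx, hx]
      ring
    calc eLpNorm (m - (G - ν[G | m₀])) 2 ν
        = eLpNorm ((m - G) - ν[m - G | m₀]) 2 ν := eLpNorm_congr_ae hsub
      _ ≤ eLpNorm (m - G) 2 ν + eLpNorm (ν[m - G | m₀]) 2 ν :=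
          eLpNorm_sub_le (hm2.sub hg2).1 integrable_condExp.1 one_le_two
      _ ≤ ε / 2 + ε / 2 :=
          add_le_add hgε.le ((eLpNorm_condExp_le_eLpNorm _ one_le_two).trans hgε.le)
      _ = ε := ENNReal.add_halves ε

lemma toReal_eLpNorm_two_sq (hm2 : MemLp m 2 ν) :
    (eLpNorm m 2 ν).toReal ^ 2 = ∫ x, m x ^ 2 ∂ν := by
  rw [hm2.eLpNorm_eq_integral_rpow_norm two_ne_zero ENNReal.ofNat_ne_top]
  have hnonneg : 0 ≤ ∫ x, m x ^ 2 ∂ν := integral_nonneg fun _ => sq_nonneg _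
  simp only [ENNReal.toReal_ofNat, Real.rpow_ofNat, Real.norm_eq_abs, sq_abs]
  rw [ENNReal.toReal_ofReal (Real.rpow_nonneg hnonneg _), ← one_div, ← Real.sqrt_eq_rpow,
    Real.sq_sqrt hnonneg]

lemma integral_birkhoffSum_sq [IsFiniteMeasure ν] (hT : MeasurePreserving T ν ν)
    (hm2 : MemLp m 2 ν) (hm : ν[m | mΩ.comap T] =ᵐ[ν] 0) (n : ℕ) :
    ∫ x, birkhoffSum T m n x ^ 2 ∂ν = n * ∫ x, m x ^ 2 ∂ν := by
  induction n with
  | zero => simp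
  | succ n ih =>
    have hS := memLp_birkhoffSum hT hm2 n
    have hST : MemLp (fun x => birkhoffSum T m n (T x)) 2 ν := hS.comp_measurePreserving hT
    have hcross : Integrable (fun x => m x • birkhoffSum T m n (T x)) ν := hm2.integrable_mul hST
    have hsplit (x : Ω) : birkhoffSum T m (n + 1) x ^ 2
        = m x ^ 2 + birkhoffSum T m n (T x) ^ 2 + 2 * (m x • birkhoffSum T m n (T x)) := by
      rw [birkhoffSum_succ', smul_eq_mul]
      ring
    simp_rw [hsplit]
    rw [integral_add (f := fun x => m x ^ 2 + birkhoffSum T m n (T x) ^ 2)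
        (hm2.integrable_sq.add hST.integrable_sq) (hcross.const_mul 2),
      integral_add hm2.integrable_sq hST.integrable_sq, integral_const_mul,
      integral_smul_comp_eq_zero hT (hm2.integrable one_le_two) hm hS.1 hcross,
      integral_comp_of_measurePreserving hT (g := fun x => birkhoffSum T m n x ^ 2) (hS.1.pow 2),
      ih]
    push_cast
    ring

lemma norm_exp_mul_I_sub_exp_mul_I_le (a b : ℝ) :
    ‖Complex.exp (a * I) - Complex.exp (b * I)‖ ≤ |a - b| := by
  have hfactor : Complex.exp (a * I) - Complex.exp (b * I)
      = Complex.exp (b * I) * (Complex.exp (I * (a - b : ℝ)) - 1) := by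
    rw [mul_sub, ← Complex.exp_add, mul_one]
    push_cast
    ring_nf
  rw [hfactor, norm_mul, Complex.norm_exp_ofReal_mul_I, one_mul]
  exact Real.norm_exp_I_mul_ofReal_sub_one_le

lemma norm_integral_exp_birkhoffSum_sub_integral_exp_birkhoffSum_le [IsProbabilityMeasure ν]
    {u : Ω → ℝ} (hT : MeasurePreserving T ν ν) (hm2 : MemLp m 2 ν) (hu2 : MemLp u 2 ν)
    (hmu : ν[m - u | mΩ.comap T] =ᵐ[ν] 0) (t : ℝ) (n : ℕ) :
    ‖∫ x, Complex.exp ((t * (√n)⁻¹ * birkhoffSum T m n x : ℝ) * I) ∂ν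
      - ∫ x, Complex.exp ((t * (√n)⁻¹ * birkhoffSum T u n x : ℝ) * I) ∂ν‖
      ≤ |t| * (eLpNorm (m - u) 2 ν).toReal := by
  have hS := memLp_birkhoffSum hT hm2 n
  have hSu := memLp_birkhoffSum hT hu2 n
  have hD := memLp_birkhoffSum hT (hm2.sub hu2) n
  have hnorm : (eLpNorm (birkhoffSum T (m - u) n) 2 ν).toReal =
      √n * (eLpNorm (m - u) 2 ν).toReal := by
    rw [← sq_eq_sq₀ ENNReal.toReal_nonneg (by positivity), mul_pow, Real.sq_sqrt n.cast_nonneg,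
      toReal_eLpNorm_two_sq hD, toReal_eLpNorm_two_sq (hm2.sub hu2),
      integral_birkhoffSum_sq hT (hm2.sub hu2) hmu]
  rw [← integral_sub (integrable_exp_mul_I (hS.1.const_mul _))
    (integrable_exp_mul_I (hSu.1.const_mul _))]
  have hpt (x : Ω) : ‖Complex.exp ((t * (√n)⁻¹ * birkhoffSum T m n x : ℝ) * I)
      - Complex.exp ((t * (√n)⁻¹ * birkhoffSum T u n x : ℝ) * I)‖
      ≤ |t| * (√n)⁻¹ * ‖birkhoffSum T (m - u) n x‖ := by
    refine (norm_exp_mul_I_sub_exp_mul_I_le _ _).trans_eq ?_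
    rw [← mul_sub, abs_mul, abs_mul, abs_of_nonneg (by positivity : 0 ≤ (√(n : ℝ))⁻¹),
      Real.norm_eq_abs]
    simp only [birkhoffSum, Pi.sub_apply, Finset.sum_sub_distrib]
  calc _ ≤ ∫ x, |t| * (√n)⁻¹ * ‖birkhoffSum T (m - u) n x‖ ∂ν :=
        norm_integral_le_of_norm_le ((hD.integrable one_le_two).norm.const_mul _) (.of_forall hpt)
    _ ≤ |t| * (√n)⁻¹ * (√n * (eLpNorm (m - u) 2 ν).toReal) := by
        rw [integral_const_mul, ← hnorm]
        gcongr
        exact integral_norm_le_toReal_eLpNorm_two hD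
    _ ≤ |t| * (eLpNorm (m - u) 2 ν).toReal := by
        rw [mul_assoc]
        gcongr
        exact inv_mul_left_le ENNReal.toReal_nonneg

lemma tendsto_integral_exp_birkhoffSum [IsProbabilityMeasure ν] (hT : Ergodic T ν)
    (hm2 : MemLp m 2 ν) (hm : ν[m | mΩ.comap T] =ᵐ[ν] 0) (t : ℝ) :
    Tendsto (fun n : ℕ => ∫ x, Complex.exp ((t * (√n)⁻¹ * birkhoffSum T m n x : ℝ) * I) ∂ν) atTop
      (𝓝 (Real.exp (-(t ^ 2 * ∫ x, m x ^ 2 ∂ν) / 2) : ℝ)) := by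
  have hmp := hT.toMeasurePreserving
  choose u hum hbdd hu hmu using fun k : ℕ =>
    exists_bounded_condExp_eq_zero_eLpNorm_sub_le hmp.measurable.comap_le hm2 hm
      (ENNReal.inv_ne_zero.2 (ENNReal.natCast_ne_top k))
  choose K hK using hbdd
  have hu2 (k : ℕ) : MemLp (u k) 2 ν := .of_bound (hum k) (K k) (hK k)
  have hlim : Tendsto (fun k => eLpNorm (m - u k) 2 ν) atTop (𝓝 0) :=
    tendsto_of_tendsto_of_tendsto_of_le_of_le tendsto_const_nhds ENNReal.tendsto_inv_nat_nhds_zero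
      (fun _ => bot_le) hmu
  have hdiff (k : ℕ) : ν[m - u k | mΩ.comap T] =ᵐ[ν] 0 := by
    filter_upwards [hm, hu k, condExp_sub (hm2.integrable one_le_two)
      ((hu2 k).integrable one_le_two) (mΩ.comap T)] with x h₁ h₂ h₃
    simp [h₁, h₂, h₃]
  have hunif : TendstoUniformly
      (fun k (n : ℕ) => ∫ x, Complex.exp ((t * (√n)⁻¹ * birkhoffSum T (u k) n x : ℝ) * I) ∂ν)
      (fun n => ∫ x, Complex.exp ((t * (√n)⁻¹ * birkhoffSum T m n x : ℝ) * I) ∂ν) atTop := by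
    rw [Metric.tendstoUniformly_iff]
    intro ε hε
    have hz : Tendsto (fun k => |t| * (eLpNorm (m - u k) 2 ν).toReal) atTop (𝓝 0) := by
      simpa using ((ENNReal.tendsto_toReal ENNReal.zero_ne_top).comp hlim).const_mul |t|
    filter_upwards [hz.eventually_lt_const hε] with k hk n
    rw [dist_eq_norm]
    exact (norm_integral_exp_birkhoffSum_sub_integral_exp_birkhoffSum_le hmp hm2 (hu2 k) (hdiff k)
      t n).trans_lt hk
  have hvar : Tendsto (fun k => ∫ x, u k x ^ 2 ∂ν) atTop (𝓝 (∫ x, m x ^ 2 ∂ν)) := by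
    have hLp : Tendsto (fun k => (hu2 k).toLp) atTop (𝓝 hm2.toLp) :=
      (Lp.tendsto_Lp_iff_tendsto_eLpNorm'' _ hu2 _ hm2).2
        (hlim.congr fun k => eLpNorm_sub_comm _ _ _ _)
    have hnorm := hLp.norm.pow 2
    simpa only [Lp.norm_toLp, toReal_eLpNorm_two_sq hm2, toReal_eLpNorm_two_sq (hu2 _)] using hnorm
  refine hunif.tendsto_of_eventually_tendsto (.of_forall fun k =>
    tendsto_integral_exp_birkhoffSum_of_bounded hT (hum k) (hK k) (hu k) t) ?_
  have hcont : Continuous fun V : ℝ => ((Real.exp (-(t ^ 2 * V) / 2) : ℝ) : ℂ) := by fun_prop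
  exact (hcont.tendsto _).comp hvar

theorem tendstoInDistribution_inv_sqrt_mul_birkhoffSum [IsProbabilityMeasure ν] (hT : Ergodic T ν)
    (hm2 : MemLp m 2 ν) (hm : ν[m | mΩ.comap T] =ᵐ[ν] 0) :
    TendstoInDistribution (fun (n : ℕ) x => (√n)⁻¹ * birkhoffSum T m n x) atTop id (fun _ => ν)
      (gaussianReal 0 (∫ x, m x ^ 2 ∂ν).toNNReal) where
  forall_aemeasurable n :=
    ((memLp_birkhoffSum hT.toMeasurePreserving hm2 n).1.const_mul _).aemeasurable
  tendsto := by
    refine ProbabilityMeasure.tendsto_iff_tendsto_charFun.2 fun t => ?_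
    have hgauss : charFun (gaussianReal 0 (∫ x, m x ^ 2 ∂ν).toNNReal) t
        = (Real.exp (-(t ^ 2 * ∫ x, m x ^ 2 ∂ν) / 2) : ℝ) := by
      rw [ProbabilityTheory.charFun_gaussianReal,
        Real.coe_toNNReal _ (integral_nonneg fun _ => sq_nonneg _)]
      push_cast
      ring_nf
    simp only [ProbabilityMeasure.coe_mk, Measure.map_id, hgauss]
    refine (tendsto_integral_exp_birkhoffSum hT hm2 hm t).congr fun n => ?_
    rw [charFun_apply_real, integral_map
      ((memLp_birkhoffSum hT.toMeasurePreserving hm2 n).1.const_mul _).aemeasurable (by fun_prop)]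
    push_cast
    simp only [mul_assoc]

lemma birkhoffSum_comp_sub_self {E : Type*} [AddCommGroup E] (χ : Ω → E) (n : ℕ) (x : Ω) :
    birkhoffSum T (χ ∘ T - χ) n x = χ (T^[n] x) - χ x := by
  simp only [birkhoffSum, Pi.sub_apply, Function.comp_apply, ← Function.iterate_succ_apply']
  exact Finset.sum_range_sub (fun j => χ (T^[j] x)) n

lemma tendstoInMeasure_inv_sqrt_mul [IsFiniteMeasure ν] {χ : Ω → ℝ}
    (hχ : AEStronglyMeasurable χ ν) :
    TendstoInMeasure ν (fun (n : ℕ) x => (√n)⁻¹ * χ x) atTop 0 :=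
  tendstoInMeasure_of_tendsto_ae (fun _ => hχ.const_mul _)
    (.of_forall fun x => by simpa using tendsto_inv_sqrt_atTop.mul_const (χ x))

lemma tendstoInMeasure_zero_comp_iterate {f : ℕ → Ω → ℝ} (hT : MeasurePreserving T ν ν)
    (hf : ∀ n, AEMeasurable (f n) ν) (hlim : TendstoInMeasure ν f atTop 0) :
    TendstoInMeasure ν (fun n x => f n (T^[n] x)) atTop 0 := by
  intro ε hε
  refine (hlim ε hε).congr fun n => ?_
  exact ((hT.iterate n).measure_preimage
    (nullMeasurableSet_le aemeasurable_const ((hf n).edist aemeasurable_const))).symm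

theorem tendstoInDistribution_inv_sqrt_mul_birkhoffSum_of_coboundary [IsProbabilityMeasure ν]
    {ψ χ : Ω → ℝ} (hT : Ergodic T ν) (hm2 : MemLp m 2 ν) (hm : ν[m | mΩ.comap T] =ᵐ[ν] 0)
    (hχ : AEStronglyMeasurable χ ν) (hψ : ψ =ᵐ[ν] m + (χ ∘ T - χ)) :
    TendstoInDistribution (fun (n : ℕ) x => (√n)⁻¹ * birkhoffSum T ψ n x) atTop id (fun _ => ν)
      (gaussianReal 0 (∫ x, m x ^ 2 ∂ν).toNNReal) := by
  have hmp := hT.toMeasurePreserving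
  have hmart := tendstoInDistribution_inv_sqrt_mul_birkhoffSum hT hm2 hm
  have hχ_lim := tendstoInMeasure_inv_sqrt_mul hχ
  have hχT_lim := tendstoInMeasure_zero_comp_iterate hmp (fun _ => (hχ.const_mul _).aemeasurable)
    hχ_lim
  have hfuture := tendstoInDistribution_of_tendstoInMeasure_sub
    (fun (n : ℕ) x => (√n)⁻¹ * birkhoffSum T m n x + (√n)⁻¹ * χ (T^[n] x)) id hmart
    (by simpa [Pi.sub_def] using hχT_lim) fun n => (hmart.forall_aemeasurable n).add
      ((hχ.const_mul _).comp_measurePreserving (hmp.iterate n)).aemeasurable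
  have hpast := tendstoInDistribution_of_tendstoInMeasure_sub
    (fun (n : ℕ) x => (√n)⁻¹ * birkhoffSum T m n x + (√n)⁻¹ * χ (T^[n] x) - (√n)⁻¹ * χ x) id hfuture
    (by simpa [Pi.sub_def] using tendstoInMeasure_inv_sqrt_mul hχ.neg) fun n =>
      (hfuture.forall_aemeasurable n).sub (hχ.const_mul _).aemeasurable
  refine hpast.congr (fun n => ?_) .rfl
  filter_upwards [hmp.quasiMeasurePreserving.birkhoffSum_ae_eq_of_ae_eq hψ n] with x hx
  rw [hx, birkhoffSum_add', birkhoffSum_comp_sub_self]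
  ring

lemma condExp_comap_ae_eq_zero [IsFiniteMeasure ν] (hT : Measurable T) (hm : Integrable m ν)
    (h : ∀ A, MeasurableSet A → ∫ x in T ⁻¹' A, m x ∂ν = 0) : ν[m | mΩ.comap T] =ᵐ[ν] 0 := by
  refine (ae_eq_condExp_of_forall_setIntegral_eq hT.comap_le hm
    (fun _ _ _ => integrableOn_zero) ?_ aestronglyMeasurable_zero).symm
  rintro _ ⟨A, hA, rfl⟩ _
  simp [h A hA]

end MartingaleCLT

section Tower
open scoped Topology ENNReal
open ProbabilityTheory (gaussianReal)

variable {X : Type*}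

/-- The map induced by `f` with return time `κ + 1`. -/
def inducedMap (f : X → X) (κ : X → ℕ) (x : X) : X := f^[κ x + 1] x

/-- The tower (Kakutani skyscraper) map over `inducedMap f κ`: the column over `x` consists of the
levels `0, …, κ x`; a point climbs its column and then returns to the base. Points above their
column are sent to the base as well, so that `towerProj f` is a semiconjugacy everywhere. -/
def towerMap (f : X → X) (κ : X → ℕ) (p : X × ℕ) : X × ℕ :=
  if p.2 < κ p.1 then (p.1, p.2 + 1) else (f^[p.2 + 1] p.1, 0)

/-- The factor map from the tower to the original system. -/
def towerProj (f : X → X) (p : X × ℕ) : X := f^[p.2] p.1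

/-- The top levels of the columns of the tower. -/
def towerTop (κ : X → ℕ) : Set (X × ℕ) := {p | p.2 = κ p.1}

variable {f : X → X} {κ : X → ℕ}

lemma towerMap_of_lt {x : X} {j : ℕ} (h : j < κ x) : towerMap f κ (x, j) = (x, j + 1) :=
  if_pos h

lemma towerMap_top (x : X) : towerMap f κ (x, κ x) = (inducedMap f κ x, 0) :=
  if_neg (lt_irrefl _)

lemma semiconj_towerProj : Function.Semiconj (towerProj f) (towerMap f κ) f := fun p => by
  by_cases h : p.2 < κ p.1 <;>
    simp only [towerMap, h, if_true, if_false, towerProj, Function.iterate_succ_apply',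
      Function.iterate_zero_apply]

lemma birkhoffSum_comp_of_semiconj {Y M : Type*} [AddCommMonoid M] {π : Y → X} {T : Y → Y}
    (hπ : Function.Semiconj π T f) (φ : X → M) (n : ℕ) (y : Y) :
    birkhoffSum T (φ ∘ π) n y = birkhoffSum f φ n (π y) := by
  simp only [birkhoffSum, Function.comp_apply, (hπ.iterate_right _).eq]

lemma mem_iff_base_mem_of_towerMap_preimage_eq {A : Set (X × ℕ)} (hA : towerMap f κ ⁻¹' A = A)
    (x : X) {j : ℕ} (hj : j ≤ κ x) : (x, j) ∈ A ↔ (x, 0) ∈ A := by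
  induction j with
  | zero => rfl
  | succ j ih => rw [← ih (by omega), ← towerMap_of_lt hj, ← mem_preimage, hA]

lemma inducedMap_preimage_base_eq {A : Set (X × ℕ)} (hA : towerMap f κ ⁻¹' A = A) :
    inducedMap f κ ⁻¹' {x | (x, 0) ∈ A} = {x | (x, 0) ∈ A} := by
  ext x
  rw [mem_preimage, mem_ofPred_eq, ← towerMap_top, ← mem_preimage, hA]
  exact mem_iff_base_mem_of_towerMap_preimage_eq hA x le_rfl

lemma eq_indicator_towerTop_add_coboundary {φ χ m : X → ℝ} {x : X}
    (h : birkhoffSum f φ (κ x + 1) x = m x + (χ (inducedMap f κ x) - χ x)) {j : ℕ} (hj : j ≤ κ x) :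
    φ (f^[j] x) = (towerTop κ).indicator (m ∘ Prod.fst) (x, j)
      + ((χ (towerMap f κ (x, j)).1
          + birkhoffSum f φ (towerMap f κ (x, j)).2 (towerMap f κ (x, j)).1)
        - (χ x + birkhoffSum f φ j x)) := by
  rcases hj.lt_or_eq with hj | rfl
  · rw [towerMap_of_lt hj, birkhoffSum_succ, indicator_of_notMem (s := towerTop κ) hj.ne]
    ring
  · rw [towerMap_top, birkhoffSum_zero, indicator_of_mem (s := towerTop κ) rfl]
    rw [birkhoffSum_succ] at h
    simp only [Function.comp_apply]
    linarith

variable [MeasurableSpace X] {ν₀ : Measure X}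

/-- The measure on the tower that restricts to `ν₀` on each level. -/
noncomputable def towerMeasure (κ : X → ℕ) (ν₀ : Measure X) : Measure (X × ℕ) :=
  Measure.sum fun j : ℕ => (ν₀.restrict {x | j ≤ κ x}).map (·, j)

/-- The projection of the tower measure to the original system. It is `f`-invariant whenever `ν₀` is
invariant under the induced map. -/
noncomputable def spreadMeasure (f : X → X) (κ : X → ℕ) (ν₀ : Measure X) : Measure X :=
  (towerMeasure κ ν₀).map (towerProj f)

lemma measurable_towerMap (hf : Measurable f) (hκ : Measurable κ) :
    Measurable (towerMap f κ) :=
  measurable_from_prod_countable_left fun j =>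
    Measurable.ite (hκ (measurableSet_Ioi (a := j)))
      (measurable_id.prodMk (measurable_const (a := j + 1)))
      ((hf.iterate (j + 1)).prodMk (measurable_const (a := 0)))

lemma measurableSet_towerTop (hκ : Measurable κ) : MeasurableSet (towerTop κ) :=
  measurableSet_eq_fun measurable_snd (hκ.comp measurable_fst)

lemma measurable_towerProj (hf : Measurable f) : Measurable (towerProj f) :=
  measurable_from_prod_countable_left fun j => hf.iterate j

lemma measurable_inducedMap (hf : Measurable f) (hκ : Measurable κ) :
    Measurable (inducedMap f κ) :=
  (measurable_towerProj hf).comp (measurable_id.prodMk (hκ.add_const 1))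

lemma lintegral_towerMeasure (hκ : Measurable κ) {u : X × ℕ → ℝ≥0∞} (hu : Measurable u) :
    ∫⁻ p, u p ∂towerMeasure κ ν₀ = ∫⁻ x, ∑ j ∈ Finset.range (κ x + 1), u (x, j) ∂ν₀ := by
  have hlevel (j : ℕ) : MeasurableSet {x | j ≤ κ x} := hκ measurableSet_Ici
  have huj (j : ℕ) : Measurable fun x => u (x, j) := by fun_prop
  calc ∫⁻ p, u p ∂towerMeasure κ ν₀
      = ∑' j, ∫⁻ x, {x | j ≤ κ x}.indicator (fun x => u (x, j)) x ∂ν₀ := by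
        rw [towerMeasure, lintegral_sum_measure]
        congr! 2 with j
        rw [lintegral_map hu (by fun_prop), lintegral_indicator (hlevel j)]
    _ = ∫⁻ x, ∑' j, {x | j ≤ κ x}.indicator (fun x => u (x, j)) x ∂ν₀ :=
        (lintegral_tsum fun j => ((huj j).indicator (hlevel j)).aemeasurable).symm
    _ = ∫⁻ x, ∑ j ∈ Finset.range (κ x + 1), u (x, j) ∂ν₀ := by
        congr! 2 with x
        rw [tsum_eq_sum (s := Finset.range (κ x + 1)) fun j hj =>
          indicator_of_notMem (by simpa [Nat.lt_succ_iff] using hj) _]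
        exact Finset.sum_congr rfl fun j hj =>
          indicator_of_mem (by simpa [Nat.lt_succ_iff] using hj) _

lemma ae_towerMeasure (hκ : Measurable κ) {s : Set (X × ℕ)} (hs : MeasurableSet s)
    (h : ∀ᵐ x ∂ν₀, ∀ j ≤ κ x, (x, j) ∈ s) : ∀ᵐ p ∂towerMeasure κ ν₀, p ∈ s := by
  rw [ae_iff, ← compl_def, ← lintegral_indicator_one hs.compl,
    lintegral_towerMeasure hκ (measurable_one.indicator hs.compl)]
  refine lintegral_eq_zero_of_ae_eq_zero ?_
  filter_upwards [h] with x hx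
  exact Finset.sum_eq_zero fun j hj => indicator_of_notMem
    (notMem_compl_iff.2 (hx j (Nat.lt_succ_iff.1 (Finset.mem_range.1 hj)))) _

lemma measurePreserving_towerMap (hf : Measurable f) (hκ : Measurable κ)
    (hG : MeasurePreserving (inducedMap f κ) ν₀ ν₀) :
    MeasurePreserving (towerMap f κ) (towerMeasure κ ν₀) (towerMeasure κ ν₀) := by
  have hT := measurable_towerMap hf hκ
  refine ⟨hT, Measure.ext_of_lintegral _ fun u hu => ?_⟩
  have hu0 : Measurable fun x => u (x, 0) := by fun_prop
  have hu1 : Measurable fun x => u (inducedMap f κ x, 0) := hu0.comp hG.measurable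
  have hclimb (x : X) : ∑ j ∈ Finset.range (κ x + 1), u (towerMap f κ (x, j))
      = ∑ j ∈ Finset.range (κ x), u (x, j + 1) + u (inducedMap f κ x, 0) := by
    rw [Finset.sum_range_succ, towerMap_top]
    congr 1
    exact Finset.sum_congr rfl fun j hj => by rw [towerMap_of_lt (Finset.mem_range.1 hj)]
  rw [lintegral_map hu hT,
    lintegral_towerMeasure hκ (u := fun p => u (towerMap f κ p)) (hu.comp hT),
    lintegral_towerMeasure hκ hu]
  simp_rw [hclimb, Finset.sum_range_succ']
  rw [lintegral_add_right _ hu1, lintegral_add_right _ hu0,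
    hG.lintegral_comp hu0]

theorem ergodic_towerMap (hf : Measurable f) (hκ : Measurable κ)
    (hG : Ergodic (inducedMap f κ) ν₀) : Ergodic (towerMap f κ) (towerMeasure κ ν₀) := by
  refine ⟨measurePreserving_towerMap hf hκ hG.toMeasurePreserving, ⟨fun A hAm hA => ?_⟩⟩
  have hbase := hG.toPreErgodic.aeconst_set (measurable_prodMk_right hAm)
    (inducedMap_preimage_base_eq hA)
  rw [eventuallyConst_set] at hbase ⊢
  refine hbase.imp (fun h => ae_towerMeasure hκ hAm ?_) fun h =>
    ae_towerMeasure hκ (s := Aᶜ) hAm.compl ?_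
  · filter_upwards [h] with x hx j hj
    exact (mem_iff_base_mem_of_towerMap_preimage_eq hA x hj).2 hx
  · filter_upwards [h] with x hx j hj hxj
    exact hx ((mem_iff_base_mem_of_towerMap_preimage_eq hA x hj).1 hxj)

theorem ergodic_spreadMeasure (hf : Measurable f) (hκ : Measurable κ)
    (hG : Ergodic (inducedMap f κ) ν₀) : Ergodic f (spreadMeasure f κ ν₀) :=
  MeasurePreserving.ergodic_of_ergodic_semiconj ⟨measurable_towerProj hf, rfl⟩
    (ergodic_towerMap hf hκ hG) hf semiconj_towerProj

lemma lintegral_spreadMeasure (hf : Measurable f) (hκ : Measurable κ) {u : X → ℝ≥0∞}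
    (hu : Measurable u) :
    ∫⁻ x, u x ∂spreadMeasure f κ ν₀ = ∫⁻ x, birkhoffSum f u (κ x + 1) x ∂ν₀ := by
  rw [spreadMeasure, lintegral_map hu (measurable_towerProj hf),
    lintegral_towerMeasure hκ (u := fun p => u (towerProj f p))
      (hu.comp (measurable_towerProj hf))]
  rfl

lemma absolutelyContinuous_spreadMeasure (hf : Measurable f) (hκ : Measurable κ) :
    ν₀ ≪ spreadMeasure f κ ν₀ := by
  refine Measure.AbsolutelyContinuous.mk fun s hs hs0 => le_antisymm ?_ bot_le
  rw [← hs0, ← lintegral_indicator_one hs, ← lintegral_indicator_one hs,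
    lintegral_spreadMeasure hf hκ (measurable_one.indicator hs)]
  exact lintegral_mono fun x => Finset.single_le_sum
    (f := fun j => s.indicator (1 : X → ℝ≥0∞) (f^[j] x)) (fun _ _ => bot_le)
    (Finset.mem_range.2 (Nat.succ_pos _))

lemma restrict_towerMeasure_top (hκ : Measurable κ) :
    (towerMeasure κ ν₀).restrict (towerTop κ) = ν₀.map fun x => (x, κ x) := by
  have htop : MeasurableSet (towerTop κ) :=
    measurableSet_towerTop hκ
  have hι : Measurable fun x => (x, κ x) := measurable_id.prodMk hκ
  ext s hs
  rw [Measure.restrict_apply hs, Measure.map_apply hι hs, ← lintegral_indicator_one (hs.inter htop),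
    lintegral_towerMeasure hκ (measurable_one.indicator (hs.inter htop)),
    ← lintegral_indicator_one (hι hs)]
  congr! 2 with x
  rw [Finset.sum_range_succ, Finset.sum_eq_zero fun j hj => indicator_of_notMem
    (fun h => (Finset.mem_range.1 hj).ne h.2) _, zero_add]
  by_cases h : (x, κ x) ∈ s <;> simp [h, indicator, towerTop]

lemma setIntegral_towerMap_preimage (hf : Measurable f) (hκ : Measurable κ) {m : X → ℝ}
    (hm : Measurable m) {A : Set (X × ℕ)} (hA : MeasurableSet A) :
    ∫ p in towerMap f κ ⁻¹' A, (towerTop κ).indicator (m ∘ Prod.fst) p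
        ∂towerMeasure κ ν₀
      = ∫ x in inducedMap f κ ⁻¹' {x | (x, 0) ∈ A}, m x ∂ν₀ := by
  have hpre : MeasurableSet (towerMap f κ ⁻¹' A) := measurable_towerMap hf hκ hA
  have hι : Measurable fun x => (x, κ x) := measurable_id.prodMk hκ
  have htop : MeasurableSet (towerTop κ) :=
    measurableSet_towerTop hκ
  have hbase : (fun x => (x, κ x)) ⁻¹' (towerMap f κ ⁻¹' A)
      = inducedMap f κ ⁻¹' {x | (x, 0) ∈ A} := by
    ext x
    rw [mem_preimage, mem_preimage, towerMap_top, mem_preimage, mem_ofPred_eq]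
  rw [setIntegral_indicator htop, ← Measure.restrict_restrict hpre, restrict_towerMeasure_top hκ,
    setIntegral_map hpre (hm.comp measurable_fst).aestronglyMeasurable hι.aemeasurable, hbase]
  rfl

lemma memLp_indicator_top (hκ : Measurable κ) {m : X → ℝ} (hm : Measurable m) {p : ℝ≥0∞}
    (hmp : MemLp m p ν₀) :
    MemLp ((towerTop κ).indicator (m ∘ Prod.fst)) p (towerMeasure κ ν₀) := by
  have hι : Measurable fun x => (x, κ x) := measurable_id.prodMk hκ
  rw [memLp_indicator_iff_restrict (measurableSet_towerTop hκ),
    restrict_towerMeasure_top hκ,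
    memLp_map_measure_iff (hm.comp measurable_fst).aestronglyMeasurable hι.aemeasurable]
  exact hmp

lemma integral_indicator_top_sq (hκ : Measurable κ) {m : X → ℝ} (hm : Measurable m) :
    ∫ p, (towerTop κ).indicator (m ∘ Prod.fst) p ^ 2 ∂towerMeasure κ ν₀
      = ∫ x, m x ^ 2 ∂ν₀ := by
  have hι : Measurable fun x => (x, κ x) := measurable_id.prodMk hκ
  have hsq (p : X × ℕ) : (towerTop κ).indicator (m ∘ Prod.fst) p ^ 2
      = (towerTop κ).indicator (fun p => m p.1 ^ 2) p := by
    by_cases hp : p ∈ towerTop κ <;> simp [hp]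
  simp_rw [hsq]
  rw [integral_indicator (measurableSet_towerTop hκ),
    restrict_towerMeasure_top hκ, integral_map (f := fun p : X × ℕ => m p.1 ^ 2)
    hι.aemeasurable ((hm.comp measurable_fst).pow_const 2).aestronglyMeasurable]

lemma tendstoInDistribution_map_of_comp {Ω Ω' Ω'' E ι : Type*} [MeasurableSpace Ω]
    [MeasurableSpace Ω'] [MeasurableSpace Ω''] [TopologicalSpace E] [MeasurableSpace E]
    [OpensMeasurableSpace E] {ν : Measure Ω} [IsProbabilityMeasure ν] {π : Ω → Ω'}
    [IsProbabilityMeasure (ν.map π)] (hπ : AEMeasurable π ν) {Y : ι → Ω' → E}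
    (hY : ∀ i, AEMeasurable (Y i) (ν.map π)) {l : Filter ι} {Z : Ω'' → E} {ρ : Measure Ω''}
    [IsProbabilityMeasure ρ]
    (h : TendstoInDistribution (fun i => Y i ∘ π) l Z (fun _ => ν) ρ) :
    TendstoInDistribution Y l Z (fun _ => ν.map π) ρ where
  forall_aemeasurable := hY
  aemeasurable_limit := h.aemeasurable_limit
  tendsto := h.tendsto.congr fun i =>
    Subtype.ext (AEMeasurable.map_map_of_aemeasurable (hY i) hπ).symm

lemma measurable_birkhoffSum {M : Type*} [AddCommMonoid M] [MeasurableSpace M] [MeasurableAdd₂ M]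
    (hf : Measurable f) {φ : X → M} (hφ : Measurable φ) (n : ℕ) :
    Measurable (birkhoffSum f φ n) :=
  Finset.measurable_fun_sum _ fun j _ => hφ.comp (hf.iterate j)

theorem tendstoInDistribution_inv_sqrt_mul_birkhoffSum_spreadMeasure
    [IsProbabilityMeasure (spreadMeasure f κ ν₀)] (hf : Measurable f) (hκ : Measurable κ)
    (hG : Ergodic (inducedMap f κ) ν₀) {φ χ m : X → ℝ} (hφ : Measurable φ) (hχ : Measurable χ)
    (hm : Measurable m) (hm2 : MemLp m 2 ν₀)
    (hm0 : ∀ A, MeasurableSet A → ∫ x in inducedMap f κ ⁻¹' A, m x ∂ν₀ = 0)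
    (hco : ∀ᵐ x ∂ν₀, birkhoffSum f φ (κ x + 1) x = m x + (χ (inducedMap f κ x) - χ x)) :
    TendstoInDistribution (fun (n : ℕ) x => (√n)⁻¹ * birkhoffSum f φ n x) atTop id
      (fun _ => spreadMeasure f κ ν₀) (gaussianReal 0 (∫ x, m x ^ 2 ∂ν₀).toNNReal) := by
  have hπ := measurable_towerProj hf
  have : IsProbabilityMeasure ((towerMeasure κ ν₀).map (towerProj f)) :=
    ‹IsProbabilityMeasure (spreadMeasure f κ ν₀)›
  have : IsProbabilityMeasure (towerMeasure κ ν₀) :=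
    Measure.isProbabilityMeasure_of_map (towerProj f)
  have hT := measurable_towerMap hf hκ
  have hχ' : Measurable fun p : X × ℕ => χ p.1 + birkhoffSum f φ p.2 p.1 :=
    (hχ.comp measurable_fst).add (measurable_from_prod_countable_left fun n =>
      measurable_birkhoffSum hf hφ n)
  have hmtop := (hm.comp measurable_fst).indicator (measurableSet_towerTop hκ)
  have hm2' := memLp_indicator_top hκ hm hm2
  have hm0' := condExp_comap_ae_eq_zero hT (hm2'.integrable one_le_two) fun A hA =>
    (setIntegral_towerMap_preimage hf hκ hm hA).trans (hm0 _ (measurable_prodMk_right hA))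
  have hco' := ae_towerMeasure hκ (measurableSet_eq_fun (hφ.comp hπ)
    (hmtop.add ((hχ'.comp hT).sub hχ'))) (hco.mono fun x hx j hj =>
      eq_indicator_towerTop_add_coboundary hx hj)
  have hclt := tendstoInDistribution_inv_sqrt_mul_birkhoffSum_of_coboundary
    (ergodic_towerMap hf hκ hG) hm2' hm0' hχ'.aestronglyMeasurable hco'
  rw [integral_indicator_top_sq hκ hm] at hclt
  refine tendstoInDistribution_map_of_comp hπ.aemeasurable (fun n =>
    ((measurable_birkhoffSum hf hφ n).const_mul _).aemeasurable) ?_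
  simp only [birkhoffSum_comp_of_semiconj semiconj_towerProj] at hclt
  exact hclt

end Tower

section LogHolder

open Real
open scoped Topology

lemma exp_sub_one_le_mul_exp (t : ℝ) : exp t - 1 ≤ t * exp t := by
  have h := mul_le_mul_of_nonneg_right (add_one_le_exp (-t)) (exp_pos t).le
  rw [← exp_add, neg_add_cancel, exp_zero] at h
  linarith

lemma sub_le_exp_sub_exp {s t : ℝ} (hs : 0 ≤ s) (hst : s ≤ t) : t - s ≤ exp t - exp s := by
  have hexp : exp t = exp s * exp (t - s) := by rw [← exp_add, add_sub_cancel]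
  calc t - s ≤ exp (t - s) - 1 := by linarith [add_one_le_exp (t - s)]
    _ ≤ exp s * (exp (t - s) - 1) :=
        le_mul_of_one_le_left (sub_nonneg.2 (one_le_exp (sub_nonneg.2 hst))) (one_le_exp hs)
    _ = exp t - exp s := by rw [hexp]; ring

lemma mul_exp_sub_one_le_mul_exp_sub_exp {a t θ c : ℝ} (ht : 0 ≤ t) (hta : t ≤ a) (hθ : 0 ≤ θ)
    (hθ1 : θ ≤ 1) (hc : exp (-a) ≤ c) :
    (1 - θ) * exp (-(2 * a)) * (exp t - 1) ≤ c * (exp t - exp (θ * t)) := by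
  have hθ' : 0 ≤ 1 - θ := sub_nonneg.2 hθ1
  have hgap : (1 - θ) * t ≤ exp t - exp (θ * t) := by
    linarith [sub_le_exp_sub_exp (mul_nonneg hθ ht) (mul_le_of_le_one_left ht hθ1)]
  calc (1 - θ) * exp (-(2 * a)) * (exp t - 1) ≤ (1 - θ) * exp (-(2 * a)) * (t * exp a) := by
        gcongr
        exact (exp_sub_one_le_mul_exp t).trans (by gcongr)
    _ = exp (-a) * ((1 - θ) * t) := by
        rw [show -a = -(2 * a) + a by ring, exp_add]; ring
    _ ≤ c * (exp t - exp (θ * t)) :=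
        mul_le_mul hc hgap (mul_nonneg hθ' ht) ((exp_pos _).le.trans hc)

lemma one_sub_mul_exp_lt_one {a θ : ℝ} (ha : 0 < a) (hθ : 0 ≤ θ) :
    (1 - θ) * exp (-(2 * a)) < 1 :=
  mul_lt_one_of_nonneg_of_lt_one_right (by linarith) (exp_pos _).le
    (exp_lt_one_iff.2 (by linarith))

/-- The cone of nonnegative continuous functions whose logarithm is `r`-Hölder with constant `a`;
written multiplicatively, so that the zero function belongs to it. -/
structure IsLogHolder {X : Type*} [PseudoMetricSpace X] (a r : ℝ) (u : C(X, ℝ)) : Prop where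
  nonneg : ∀ x, 0 ≤ u x
  le_exp_mul : ∀ x y, u x ≤ exp (a * dist x y ^ r) * u y

lemma integrable_continuousMap {X : Type*} [TopologicalSpace X] [CompactSpace X]
    [MeasurableSpace X] [OpensMeasurableSpace X] {P : Measure X} [IsFiniteMeasure P] (u : C(X, ℝ)) :
    Integrable u P :=
  (BoundedContinuousFunction.mkOfCompact u).integrable P

lemma continuous_integral_continuousMap {X : Type*} [TopologicalSpace X] [CompactSpace X]
    [MeasurableSpace X] [BorelSpace X] {P : Measure X} [IsFiniteMeasure P] :
    Continuous fun u : C(X, ℝ) => ∫ x, u x ∂P :=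
  (continuous_integral.comp (ContinuousMap.toLp (E := ℝ) 1 P ℝ).continuous).congr fun u =>
    integral_congr_ae (ContinuousMap.coeFn_toLp P u)

namespace IsLogHolder

variable {X : Type*} [PseudoMetricSpace X] {a b r : ℝ} {u v : C(X, ℝ)}

lemma zero : IsLogHolder a r (0 : C(X, ℝ)) := ⟨fun _ => le_rfl, fun _ _ => by simp⟩

lemma const (ha : 0 ≤ a) {c : ℝ} (hc : 0 ≤ c) : IsLogHolder a r (ContinuousMap.const X c) :=
  ⟨fun _ => hc, fun _ _ => le_mul_of_one_le_left hc (one_le_exp (by positivity))⟩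

lemma add (hu : IsLogHolder a r u) (hv : IsLogHolder a r v) : IsLogHolder a r (u + v) where
  nonneg x := add_nonneg (hu.nonneg x) (hv.nonneg x)
  le_exp_mul x y := by
    rw [ContinuousMap.add_apply, ContinuousMap.add_apply, mul_add]
    exact add_le_add (hu.le_exp_mul x y) (hv.le_exp_mul x y)

lemma mul (hu : IsLogHolder a r u) (hv : IsLogHolder b r v) : IsLogHolder (a + b) r (u * v) where
  nonneg x := mul_nonneg (hu.nonneg x) (hv.nonneg x)
  le_exp_mul x y := by
    refine (mul_le_mul (hu.le_exp_mul x y) (hv.le_exp_mul x y) (hv.nonneg x)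
      (mul_nonneg (exp_pos _).le (hu.nonneg y))).trans_eq ?_
    rw [ContinuousMap.mul_apply, add_mul, exp_add]
    ring

lemma smul {c : ℝ} (hc : 0 ≤ c) (hu : IsLogHolder a r u) : IsLogHolder a r (c • u) where
  nonneg x := mul_nonneg hc (hu.nonneg x)
  le_exp_mul x y := (mul_le_mul_of_nonneg_left (hu.le_exp_mul x y) hc).trans_eq
    (mul_left_comm _ _ _)

lemma mono (hab : a ≤ b) (hu : IsLogHolder a r u) : IsLogHolder b r u where
  nonneg := hu.nonneg
  le_exp_mul x y := (hu.le_exp_mul x y).trans (mul_le_mul_of_nonneg_right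
    (exp_le_exp.2 (by gcongr)) (hu.nonneg y))

lemma comp {g : C(X, X)} {l : ℝ} (hr : 0 ≤ r) (ha : 0 ≤ a) (hl : 0 ≤ l)
    (hg : ∀ x y, dist (g x) (g y) ≤ l * dist x y) (hu : IsLogHolder a r u) :
    IsLogHolder (a * l ^ r) r (u.comp g) where
  nonneg x := hu.nonneg (g x)
  le_exp_mul x y := by
    refine (hu.le_exp_mul (g x) (g y)).trans
      (mul_le_mul_of_nonneg_right (exp_le_exp.2 ?_) (hu.nonneg (g y)))
    rw [mul_assoc, ← mul_rpow hl dist_nonneg]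
    gcongr
    exact hg x y

lemma sum {ι : Type*} (s : Finset ι) {c : ι → C(X, ℝ)} (hc : ∀ i ∈ s, IsLogHolder a r (c i)) :
    IsLogHolder a r (∑ i ∈ s, c i) :=
  Finset.sum_induction c _ (fun _ _ => add) zero hc

lemma of_tendsto {s : ℕ → C(X, ℝ)} (h : Tendsto s atTop (𝓝 u))
    (hs : ∀ n, IsLogHolder a r (s n)) : IsLogHolder a r u := by
  have happ (x : X) : Tendsto (fun n => s n x) atTop (𝓝 (u x)) :=
    ((continuous_eval_const x).tendsto u).comp h
  exact ⟨fun x => ge_of_tendsto' (happ x) fun n => (hs n).nonneg x, fun x y =>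
    le_of_tendsto_of_tendsto' (happ x) ((happ y).const_mul _) fun n => (hs n).le_exp_mul x y⟩

lemma tsum {c : ℕ → C(X, ℝ)} (hc : Summable c) (h : ∀ n, IsLogHolder a r (c n)) :
    IsLogHolder a r (∑' n, c n) :=
  of_tendsto hc.hasSum.tendsto_sum_nat fun n => sum (Finset.range n) fun i _ => h i

lemma of_abs_sub_le [CompactSpace X] {C M : ℝ} (hb : 0 < b) (hC : 0 ≤ C)
    (hu : ∀ x y, |u x - u y| ≤ C * dist x y ^ r) (hM : C / b + ‖u‖ ≤ M) :
    IsLogHolder b r (u + ContinuousMap.const X M) := by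
  have hlow (x : X) : C / b ≤ u x + M := by
    linarith [neg_le_of_abs_le (u.norm_coe_le_norm x)]
  have hpos (x : X) : 0 ≤ u x + M := (div_nonneg hC hb.le).trans (hlow x)
  refine ⟨hpos, fun x y => ?_⟩
  have hCb : C ≤ b * (u y + M) := by
    rw [mul_comm]; exact (div_le_iff₀ hb).1 (hlow y)
  calc u x + M ≤ u y + M + C * dist x y ^ r := by linarith [le_of_abs_le (hu x y)]
    _ ≤ u y + M + b * (u y + M) * dist x y ^ r := by gcongr
    _ = (b * dist x y ^ r + 1) * (u y + M) := by ring
    _ ≤ exp (b * dist x y ^ r) * (u y + M) :=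
        mul_le_mul_of_nonneg_right (add_one_le_exp _) (hpos y)

section UnitDiameter

variable (hX : ∀ x y : X, dist x y ≤ 1)

include hX

lemma le_exp_mul_of_dist_le_one (hr : 0 ≤ r) (ha : 0 ≤ a) (hu : IsLogHolder a r u) (x y : X) :
    u x ≤ exp a * u y :=
  (hu.le_exp_mul x y).trans (mul_le_mul_of_nonneg_right (exp_le_exp.2
    (mul_le_of_le_one_right ha (rpow_le_one dist_nonneg (hX x y) hr))) (hu.nonneg y))

lemma anti_exponent {s : ℝ} (ha : 0 ≤ a) (hs : 0 ≤ s) (hsr : s ≤ r) (hu : IsLogHolder a r u) :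
    IsLogHolder a s u where
  nonneg := hu.nonneg
  le_exp_mul x y := (hu.le_exp_mul x y).trans (mul_le_mul_of_nonneg_right (exp_le_exp.2
    (mul_le_mul_of_nonneg_left (rpow_le_rpow_of_exponent_ge' dist_nonneg (hX x y) hs hsr) ha))
    (hu.nonneg y))

variable [CompactSpace X] [MeasurableSpace X] [BorelSpace X] {P : Measure X}
  [IsProbabilityMeasure P]

lemma le_exp_mul_integral (hr : 0 ≤ r) (ha : 0 ≤ a) (hu : IsLogHolder a r u) (x : X) :
    u x ≤ exp a * ∫ y, u y ∂P := by
  have h := integral_mono (integrable_const (u x))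
    ((integrable_continuousMap u).const_mul (exp a))
    (hu.le_exp_mul_of_dist_le_one hX hr ha x) (μ := P)
  rwa [integral_const, probReal_univ, one_smul, integral_const_mul] at h

lemma exp_neg_mul_integral_le (hr : 0 ≤ r) (ha : 0 ≤ a) (hu : IsLogHolder a r u) (x : X) :
    exp (-a) * ∫ y, u y ∂P ≤ u x := by
  have h := integral_mono (integrable_continuousMap u) (integrable_const (exp a * u x))
    (fun y => hu.le_exp_mul_of_dist_le_one hX hr ha y x) (μ := P)
  rw [integral_const, probReal_univ, one_smul] at h
  rwa [exp_neg, inv_mul_le_iff₀ (exp_pos a)]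

lemma eq_zero_of_integral_eq_zero (hr : 0 ≤ r) (ha : 0 ≤ a) (hu : IsLogHolder a r u)
    (hu0 : ∫ y, u y ∂P = 0) : u = 0 := by
  ext x
  have h := hu.le_exp_mul_integral hX hr ha (P := P) x
  rw [hu0, mul_zero] at h
  exact h.antisymm (hu.nonneg x)

lemma norm_sub_le (hr : 0 ≤ r) (ha : 0 ≤ a) (hu : IsLogHolder a r u) (hv : IsLogHolder a r v)
    (hu1 : ∫ y, u y ∂P = 1) (hv1 : ∫ y, v y ∂P = 1) : ‖u - v‖ ≤ exp a := by
  refine (ContinuousMap.norm_le _ (exp_pos a).le).2 fun x => ?_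
  have hux := hu.le_exp_mul_integral hX hr ha (P := P) x
  have hvx := hv.le_exp_mul_integral hX hr ha (P := P) x
  rw [hu1, mul_one] at hux
  rw [hv1, mul_one] at hvx
  exact abs_sub_le_of_nonneg_of_le (hu.nonneg x) hux (hv.nonneg x) hvx

lemma sub_const {θ : ℝ} (hr : 0 ≤ r) (ha : 0 ≤ a) (hθ : 0 ≤ θ) (hθ1 : θ ≤ 1)
    (hu : IsLogHolder (θ * a) r u) (hu1 : ∫ y, u y ∂P = 1) :
    IsLogHolder a r (u - ContinuousMap.const X ((1 - θ) * exp (-(2 * a)))) := by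
  have hlow (x : X) : exp (-a) ≤ u x := by
    have h := hu.exp_neg_mul_integral_le hX hr (mul_nonneg hθ ha) (P := P) x
    rw [hu1, mul_one] at h
    exact (exp_le_exp.2 (neg_le_neg (mul_le_of_le_one_left ha hθ1))).trans h
  refine ⟨fun x => sub_nonneg.2 (le_trans ?_ (hlow x)), fun x y => ?_⟩
  · exact (mul_le_of_le_one_left (exp_pos _).le (by linarith)).trans
      (exp_le_exp.2 (by linarith))
  · have hgap := mul_exp_sub_one_le_mul_exp_sub_exp (t := a * dist x y ^ r) (by positivity)
      (mul_le_of_le_one_right ha (rpow_le_one dist_nonneg (hX x y) hr)) hθ hθ1 (hlow y)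
    have hxy := hu.le_exp_mul x y
    rw [mul_assoc] at hxy
    simp only [ContinuousMap.sub_apply, ContinuousMap.const_apply]
    linarith

end UnitDiameter

end IsLogHolder

end LogHolder

section FullBranch

open scoped Topology ENNReal

section Density

variable {X : Type*} [MeasurableSpace X] {P : Measure X} {ρ : X → ℝ}

/-- The measure with density `ρ` with respect to `P`; negative values of `ρ` are truncated to
zero. -/
noncomputable def densityMeasure (P : Measure X) (ρ : X → ℝ) : Measure X :=
  P.withDensity fun x => ENNReal.ofReal (ρ x)

lemma densityMeasure_absolutelyContinuous : densityMeasure P ρ ≪ P :=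
  withDensity_absolutelyContinuous P _

lemma absolutelyContinuous_densityMeasure (hρ : Measurable ρ) (hpos : ∀ x, 0 < ρ x) :
    P ≪ densityMeasure P ρ :=
  withDensity_absolutelyContinuous' hρ.ennreal_ofReal.aemeasurable
    (ae_of_all _ fun x => (ENNReal.ofReal_pos.2 (hpos x)).ne')

variable (hρ0 : ∀ x, 0 ≤ ρ x)

include hρ0

lemma densityMeasure_apply {A : Set X} (hA : MeasurableSet A) (hint : IntegrableOn ρ A P) :
    densityMeasure P ρ A = ENNReal.ofReal (∫ x in A, ρ x ∂P) := by
  rw [densityMeasure, withDensity_apply _ hA,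
    ofReal_integral_eq_lintegral_ofReal hint (ae_of_all _ hρ0)]

variable (hρ : Measurable ρ)

include hρ

lemma integral_densityMeasure (g : X → ℝ) :
    ∫ x, g x ∂densityMeasure P ρ = ∫ x, ρ x * g x ∂P := by
  rw [densityMeasure, integral_withDensity_eq_integral_toReal_smul hρ.ennreal_ofReal
    (ae_of_all _ fun _ => ENNReal.ofReal_lt_top)]
  simp only [ENNReal.toReal_ofReal (hρ0 _), smul_eq_mul]

lemma setIntegral_densityMeasure (g : X → ℝ) {A : Set X} (hA : MeasurableSet A) :
    ∫ x in A, g x ∂densityMeasure P ρ = ∫ x in A, ρ x * g x ∂P := by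
  rw [← integral_densityMeasure hρ0 hρ g, densityMeasure, restrict_withDensity hA, densityMeasure]

lemma integrable_densityMeasure_iff {g : X → ℝ} :
    Integrable g (densityMeasure P ρ) ↔ Integrable (fun x => ρ x * g x) P := by
  rw [densityMeasure, integrable_withDensity_iff_integrable_smul' hρ.ennreal_ofReal
    (ae_of_all _ fun _ => ENNReal.ofReal_lt_top)]
  simp only [ENNReal.toReal_ofReal (hρ0 _), smul_eq_mul]

end Density

section SumOfBranches

variable {X : Type*} [TopologicalSpace X] [MeasurableSpace X] [BorelSpace X] {Q Q' : Measure X}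
  {F : X → ℝ}

lemma integral_map_densityMeasure {g : C(X, X)} {v : C(X, ℝ)} (hv : ∀ y, 0 ≤ v y)
    (hF : Measurable F) {c : X → ℝ} (hc : F ∘ g =ᵐ[Q] c) :
    ∫ x, F x ∂(densityMeasure Q v).map g = ∫ y, v y * c y ∂Q := by
  rw [integral_map g.measurable.aemeasurable hF.aestronglyMeasurable,
    integral_densityMeasure hv v.measurable]
  exact integral_congr_ae (hc.mono fun y hy => by simp only [← hy, Function.comp])

lemma integrable_map_densityMeasure_iff {g : C(X, X)} {v : C(X, ℝ)} (hv : ∀ y, 0 ≤ v y)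
    (hF : Measurable F) {c : X → ℝ} (hc : F ∘ g =ᵐ[Q] c) :
    Integrable F ((densityMeasure Q v).map g) ↔ Integrable (fun y => v y * c y) Q := by
  rw [integrable_map_measure hF.aestronglyMeasurable g.measurable.aemeasurable,
    integrable_densityMeasure_iff hv v.measurable]
  exact integrable_congr (hc.mono fun y hy => by simp only [← hy])

variable [CompactSpace X] [IsFiniteMeasure Q] {h : ℕ → C(X, X)} {w u : ℕ → C(X, ℝ)}

lemma summable_integral_norm_of_summable_norm (hs : Summable fun k => ‖w k * u k‖) :
    Summable fun k => ∫ y, ‖(w k * u k) y‖ ∂Q := by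
  refine .of_nonneg_of_le (fun k => integral_nonneg fun y => norm_nonneg _) (fun k => ?_)
    (hs.mul_left (Q.real univ))
  refine (integral_mono (integrable_continuousMap _).norm (integrable_const _)
    fun y => (w k * u k).norm_coe_le_norm y).trans_eq ?_
  rw [integral_const, smul_eq_mul]

variable (hQ : Q' = Measure.sum fun k => (densityMeasure Q (w k)).map (h k))
  (hw : ∀ k y, 0 ≤ w k y) (hF : Measurable F) (hu : ∀ k, F ∘ h k =ᵐ[Q] u k)
  (hs : Summable fun k => ‖w k * u k‖)

include hQ hw hF hu hs

lemma integrable_of_summable_branches : Integrable F Q' := by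
  rw [hQ]
  refine integrable_sum_measure (fun k => (integrable_map_densityMeasure_iff (hw k) hF
    (hu k)).2 (integrable_continuousMap (w k * u k)))
    ((summable_integral_norm_of_summable_norm hs (Q := Q)).congr fun k => ?_)
  rw [integral_map_densityMeasure (hw k) hF.norm ((hu k).fun_comp norm)]
  exact integral_congr_ae (ae_of_all _ fun y => by
    simp [abs_of_nonneg (hw k y)])

lemma integral_eq_integral_tsum_branches : ∫ x, F x ∂Q' = ∫ y, (∑' k, w k * u k) y ∂Q := by
  have hint := integrable_of_summable_branches hQ hw hF hu hs
  rw [hQ] at hint ⊢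
  rw [integral_sum_measure hint]
  simp_rw [integral_map_densityMeasure (hw _) hF (hu _), ← ContinuousMap.tsum_apply hs.of_norm]
  exact (hasSum_integral_of_summable_integral_norm (fun k => integrable_continuousMap (w k * u k))
    (summable_integral_norm_of_summable_norm hs)).tsum_eq

end SumOfBranches

section TransferOperator

variable {X : Type*} [TopologicalSpace X] [CompactSpace X]

lemma norm_continuousMap_comp_le (u : C(X, ℝ)) (g : C(X, X)) : ‖u.comp g‖ ≤ ‖u‖ :=
  (ContinuousMap.norm_le _ (norm_nonneg u)).2 fun x => u.norm_coe_le_norm (g x)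

/-- The operator `u ↦ v * (u ∘ g)` on continuous functions: one branch of a transfer operator. -/
noncomputable def weightedComp (v : C(X, ℝ)) (g : C(X, X)) : C(X, ℝ) →L[ℝ] C(X, ℝ) :=
  LinearMap.mkContinuous
    { toFun u := v * u.comp g
      map_add' _ _ := by ext; simp [mul_add]
      map_smul' _ _ := by ext; simp }
    ‖v‖ fun u => (norm_mul_le _ _).trans
      (mul_le_mul_of_nonneg_left (norm_continuousMap_comp_le u g) (norm_nonneg v))

lemma norm_weightedComp_le (v : C(X, ℝ)) (g : C(X, X)) : ‖weightedComp v g‖ ≤ ‖v‖ :=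
  LinearMap.mkContinuous_norm_le _ (norm_nonneg v) _

/-- The transfer operator `u ↦ ∑ₖ wₖ * (u ∘ hₖ)` of the map with inverse branches `hₖ`, whose
Jacobians are `wₖ`. -/
noncomputable def transferOperator (h : ℕ → C(X, X)) (w : ℕ → C(X, ℝ)) :
    C(X, ℝ) →L[ℝ] C(X, ℝ) :=
  ∑' k, weightedComp (w k) (h k)

variable {h : ℕ → C(X, X)} {w : ℕ → C(X, ℝ)}

lemma transferOperator_apply (hw : Summable fun k => ‖w k‖) (u : C(X, ℝ)) :
    transferOperator h w u = ∑' k, w k * u.comp (h k) :=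
  ContinuousLinearMap.map_tsum (ContinuousLinearMap.apply ℝ (C(X, ℝ)) u)
    (Summable.of_norm_bounded hw fun k => norm_weightedComp_le (w k) (h k))

lemma summable_norm_mul_comp (hw : Summable fun k => ‖w k‖) (u : C(X, ℝ)) :
    Summable fun k => ‖w k * u.comp (h k)‖ :=
  .of_nonneg_of_le (fun _ => norm_nonneg _) (fun k => ((weightedComp (w k) (h k)).le_opNorm u).trans
    (mul_le_mul_of_nonneg_right (norm_weightedComp_le (w k) (h k)) (norm_nonneg u)))
    (hw.mul_right ‖u‖)

end TransferOperator

/-- A measurable map `f` and an inducing height `κ` such that the induced map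
`G x = f^[κ x + 1] x` is a full-branch map: its inverse branches `h k` are defined on the whole
space, contract by the factor `l`, take values (up to null sets) in `{κ = k}`, and have Jacobians
`w k` with respect to `P` which are log-Hölder with a common constant `D`. As for a map with a
neutral fixed point, `f` maps the branch `h (k + 1)` to the branch `h k`. -/
structure IsFullBranchSystem {X : Type*} [PseudoMetricSpace X] [MeasurableSpace X] [CompactSpace X]
    (P : Measure X) (f : X → X) (κ : X → ℕ) (h : ℕ → C(X, X)) (w : ℕ → C(X, ℝ))
    (l D r : ℝ) : Prop where
  measurable_map : Measurable f
  measurable_height : Measurable κ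
  dist_le_one : ∀ x y : X, dist x y ≤ 1
  exponent_pos : 0 < r
  exponent_le_one : r ≤ 1
  contraction_nonneg : 0 ≤ l
  contraction_lt_one : l < 1
  dist_branch_le : ∀ k x y, dist (h k x) (h k y) ≤ l * dist x y
  distortion_nonneg : 0 ≤ D
  isLogHolder_weight : ∀ k, IsLogHolder D r (w k)
  summable_sq_mul_norm_weight : Summable fun k : ℕ => ((k : ℝ) + 1) ^ 2 * ‖w k‖
  eq_sum_map_densityMeasure : P = Measure.sum fun k => (densityMeasure P (w k)).map (h k)
  map_branch_zero : ∀ᵐ y ∂P, f (h 0 y) = y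
  map_branch_succ : ∀ᵐ y ∂P, ∀ k, f (h (k + 1) y) = h k y
  height_branch : ∀ᵐ y ∂P, ∀ k, κ (h k y) = k

namespace IsFullBranchSystem

variable {X : Type*} [PseudoMetricSpace X] [CompactSpace X] [MeasurableSpace X]
  {P : Measure X} {f : X → X} {κ : X → ℕ} {h : ℕ → C(X, X)}
  {w : ℕ → C(X, ℝ)} {l D r : ℝ}

section Duality

variable (S : IsFullBranchSystem P f κ h w l D r)

include S

lemma weight_nonneg (k : ℕ) (y : X) : 0 ≤ w k y := (S.isLogHolder_weight k).nonneg y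

lemma summable_mul_norm_weight : Summable fun k : ℕ => ((k : ℝ) + 1) * ‖w k‖ :=
  .of_nonneg_of_le (fun k => by positivity) (fun k => mul_le_mul_of_nonneg_right
    (le_self_pow₀ (by linarith [Nat.cast_nonneg (α := ℝ) k]) two_ne_zero) (norm_nonneg _))
    S.summable_sq_mul_norm_weight

lemma summable_norm_weight : Summable fun k => ‖w k‖ :=
  .of_nonneg_of_le (fun k => norm_nonneg _) (fun k => le_mul_of_one_le_left (norm_nonneg _)
    (by linarith [Nat.cast_nonneg (α := ℝ) k])) S.summable_mul_norm_weight

lemma measurable_inducedMap : Measurable (inducedMap f κ) :=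
  _root_.measurable_inducedMap S.measurable_map S.measurable_height

lemma inducedMap_branch : ∀ᵐ y ∂P, ∀ k, inducedMap f κ (h k y) = y := by
  filter_upwards [S.map_branch_zero, S.map_branch_succ, S.height_branch] with y h0 hsucc hκ k
  have hiter : f^[k + 1] (h k y) = y := by
    induction k with
    | zero => exact h0
    | succ k ih => rw [Function.iterate_succ_apply, hsucc, ih]
  rwa [inducedMap, hκ k]

lemma birkhoffSum_branch {M : Type*} [AddCommMonoid M] (φ : X → M) :
    ∀ᵐ y ∂P, ∀ k, birkhoffSum f φ (κ (h k y) + 1) (h k y) =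
      ∑ i ∈ Finset.range (k + 1), φ (h i y) := by
  filter_upwards [S.map_branch_succ, S.height_branch] with y hsucc hκ k
  rw [hκ k]
  induction k with
  | zero => simp
  | succ k ih => rw [birkhoffSum_succ', hsucc, ih, Finset.sum_range_succ _ (k + 1), add_comm]

variable [BorelSpace X]

lemma restrict_preimage_inducedMap {A : Set X} (hA : MeasurableSet A) :
    P.restrict (inducedMap f κ ⁻¹' A) =
      Measure.sum fun k => (densityMeasure (P.restrict A) (w k)).map (h k) := by
  have hG := S.measurable_inducedMap hA
  conv_lhs => rw [S.eq_sum_map_densityMeasure, Measure.restrict_sum _ hG]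
  congr with k : 1
  rw [Measure.restrict_map (h k).measurable hG, densityMeasure, densityMeasure,
    ← restrict_withDensity hA]
  congr 1
  refine Measure.restrict_congr_set (withDensity_absolutelyContinuous P _ ?_)
  filter_upwards [S.inducedMap_branch] with y hy
  exact propext (by change inducedMap f κ (h k y) ∈ A ↔ y ∈ A; rw [hy k])

variable [IsFiniteMeasure P] {F : X → ℝ} {u : ℕ → C(X, ℝ)} (hF : Measurable F)
  (hu : ∀ᵐ y ∂P, ∀ k, F (h k y) = u k y) (hs : Summable fun k => ‖w k * u k‖)

include hF hu hs

lemma integrable_of_branches : Integrable F P :=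
  integrable_of_summable_branches S.eq_sum_map_densityMeasure S.weight_nonneg hF
    (ae_all_iff.1 hu) hs

lemma setIntegral_preimage_inducedMap {A : Set X} (hA : MeasurableSet A) :
    ∫ x in inducedMap f κ ⁻¹' A, F x ∂P = ∫ y in A, (∑' k, w k * u k) y ∂P :=
  integral_eq_integral_tsum_branches (S.restrict_preimage_inducedMap hA) S.weight_nonneg hF
    (fun k => ae_restrict_of_ae (ae_all_iff.1 hu k)) hs

end Duality

end IsFullBranchSystem

end FullBranch

section Contraction

open scoped Topology

namespace IsFullBranchSystem

variable {X : Type*} [PseudoMetricSpace X] [CompactSpace X] [MeasurableSpace X]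
  {P : Measure X} {f : X → X} {κ : X → ℕ} {h : ℕ → C(X, X)} {w : ℕ → C(X, ℝ)} {l D r a : ℝ}
  (S : IsFullBranchSystem P f κ h w l D r)

include S

lemma transferOperator_apply (u : C(X, ℝ)) : transferOperator h w u = ∑' k, w k * u.comp (h k) :=
  _root_.transferOperator_apply S.summable_norm_weight u

lemma isLogHolder_tsum {c : ℕ → C(X, ℝ)} (hs : Summable fun k => ‖w k * c k‖)
    (hc : ∀ k, IsLogHolder a r (c k)) : IsLogHolder (D + a) r (∑' k, w k * c k) :=
  .tsum hs.of_norm fun k => (S.isLogHolder_weight k).mul (hc k)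

lemma isLogHolder_comp_branch (ha : 0 ≤ a) {u : C(X, ℝ)} (hu : IsLogHolder a r u) (k : ℕ) :
    IsLogHolder (a * l ^ r) r (u.comp (h k)) :=
  hu.comp S.exponent_pos.le ha S.contraction_nonneg (S.dist_branch_le k)

lemma isLogHolder_transferOperator (ha : 0 ≤ a) {u : C(X, ℝ)} (hu : IsLogHolder a r u) :
    IsLogHolder (D + a * l ^ r) r (transferOperator h w u) := by
  rw [S.transferOperator_apply]
  exact S.isLogHolder_tsum (summable_norm_mul_comp S.summable_norm_weight u)
    (S.isLogHolder_comp_branch ha hu)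

lemma rpow_contraction_lt_one : l ^ r < 1 :=
  Real.rpow_lt_one S.contraction_nonneg S.contraction_lt_one S.exponent_pos

lemma exists_distortion_add_mul_lt : ∃ a, D + a * l ^ r < a := by
  have hl : 0 < 1 - l ^ r := sub_pos.2 S.rpow_contraction_lt_one
  refine ⟨(D + 1) / (1 - l ^ r), ?_⟩
  have h1 : (D + 1) / (1 - l ^ r) * (1 - l ^ r) = D + 1 := div_mul_cancel₀ _ hl.ne'
  linarith

lemma pos_of_distortion_add_mul_lt (ha : D + a * l ^ r < a) : 0 < a := by
  by_contra! h
  nlinarith [S.distortion_nonneg, S.rpow_contraction_lt_one]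

section Iterates

variable (ha : D + a * l ^ r < a)

include ha

lemma isLogHolder_transferOperator_pow {u : C(X, ℝ)} (hu : IsLogHolder a r u) (n : ℕ) :
    IsLogHolder a r ((transferOperator h w ^ n) u) := by
  induction n with
  | zero => exact hu
  | succ n ih =>
    rw [pow_succ']
    exact (S.isLogHolder_transferOperator (S.pos_of_distortion_add_mul_lt ha).le ih).mono ha.le

end Iterates

variable [BorelSpace X]

lemma setIntegral_preimage_inducedMap_continuousMap [IsFiniteMeasure P] (u : C(X, ℝ)) {A : Set X}
    (hA : MeasurableSet A) :
    ∫ x in inducedMap f κ ⁻¹' A, u x ∂P = ∫ x in A, transferOperator h w u x ∂P := by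
  rw [S.transferOperator_apply]
  exact S.setIntegral_preimage_inducedMap u.measurable (u := fun k => u.comp (h k))
    (ae_of_all _ fun _ _ => rfl) (summable_norm_mul_comp S.summable_norm_weight u) hA

lemma integral_transferOperator [IsFiniteMeasure P] (u : C(X, ℝ)) :
    ∫ x, transferOperator h w u x ∂P = ∫ x, u x ∂P := by
  simpa using (S.setIntegral_preimage_inducedMap_continuousMap u MeasurableSet.univ).symm

lemma integral_transferOperator_pow [IsFiniteMeasure P] (u : C(X, ℝ)) (n : ℕ) :
    ∫ x, (transferOperator h w ^ n) u x ∂P = ∫ x, u x ∂P := by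
  induction n with
  | zero => rfl
  | succ n ih =>
    rw [pow_succ', ← ih]
    exact S.integral_transferOperator _

variable [IsProbabilityMeasure P] {θ : ℝ}

/- The transfer operator maps the cone of constant `a` into that of constant `θ * a`, and a function
of the smaller cone stays in the larger one after subtracting a fixed multiple of its integral: each
application of the operator couples a fixed proportion of the mass. -/
lemma exists_transferOperator_eq_const_add_smul (ha : 0 < a) (hθ : 0 ≤ θ) (hθ1 : θ < 1)
    (hθa : D + a * l ^ r ≤ θ * a) {u : C(X, ℝ)} (hu : IsLogHolder a r u) (hu1 : ∫ x, u x ∂P = 1) :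
    ∃ v : C(X, ℝ), IsLogHolder a r v ∧ ∫ x, v x ∂P = 1 ∧
      transferOperator h w u = ContinuousMap.const X ((1 - θ) * Real.exp (-(2 * a))) +
        (1 - (1 - θ) * Real.exp (-(2 * a))) • v := by
  set δ := (1 - θ) * Real.exp (-(2 * a))
  have hδ : 0 < 1 - δ := sub_pos.2 (one_sub_mul_exp_lt_one ha hθ)
  have hL1 : ∫ x, transferOperator h w u x ∂P = 1 := (S.integral_transferOperator u).trans hu1
  have hLδ := ((S.isLogHolder_transferOperator ha.le hu).mono hθa).sub_const S.dist_le_one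
    S.exponent_pos.le ha.le hθ hθ1.le hL1
  refine ⟨(1 - δ)⁻¹ • (transferOperator h w u - ContinuousMap.const X δ),
    hLδ.smul (inv_nonneg.2 hδ.le), ?_, ?_⟩
  · simp only [ContinuousMap.smul_apply, ContinuousMap.sub_apply, ContinuousMap.const_apply,
      smul_eq_mul]
    rw [integral_const_mul, integral_sub (integrable_continuousMap _) (integrable_const δ), hL1,
      integral_const, probReal_univ, one_smul, inv_mul_cancel₀ hδ.ne']
  · rw [smul_inv_smul₀ hδ.ne']; abel

lemma norm_transferOperator_pow_sub_le (ha : 0 < a) (hθ : 0 ≤ θ) (hθ1 : θ < 1)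
    (hθa : D + a * l ^ r ≤ θ * a) (n : ℕ) {u v : C(X, ℝ)} (hu : IsLogHolder a r u)
    (hv : IsLogHolder a r v) (hu1 : ∫ x, u x ∂P = 1) (hv1 : ∫ x, v x ∂P = 1) :
    ‖(transferOperator h w ^ n) u - (transferOperator h w ^ n) v‖ ≤
      (1 - (1 - θ) * Real.exp (-(2 * a))) ^ n * Real.exp a := by
  induction n generalizing u v with
  | zero =>
    simpa using hu.norm_sub_le S.dist_le_one S.exponent_pos.le ha.le hv hu1 hv1
  | succ n ih =>
    obtain ⟨u', hu', hu1', hLu⟩ := S.exists_transferOperator_eq_const_add_smul ha hθ hθ1 hθa hu hu1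
    obtain ⟨v', hv', hv1', hLv⟩ := S.exists_transferOperator_eq_const_add_smul ha hθ hθ1 hθa hv hv1
    have hδ := sub_nonneg.2 (one_sub_mul_exp_lt_one ha hθ).le
    rw [pow_succ, mul_apply_eq_comp, mul_apply_eq_comp, hLu, hLv,
      ← map_sub, add_sub_add_left_eq_sub, ← smul_sub, map_smul, norm_smul, map_sub,
      Real.norm_of_nonneg hδ, pow_succ', mul_assoc]
    exact mul_le_mul_of_nonneg_left (ih hu' hv' hu1' hv1') hδ

theorem exists_norm_transferOperator_pow_sub_le (ha : D + a * l ^ r < a) :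
    ∃ K q : ℝ, 0 ≤ q ∧ q < 1 ∧ ∀ u v : C(X, ℝ), IsLogHolder a r u → IsLogHolder a r v →
      ∫ x, u x ∂P = ∫ x, v x ∂P → ∀ n,
        ‖(transferOperator h w ^ n) u - (transferOperator h w ^ n) v‖ ≤
          K * (∫ x, u x ∂P) * q ^ n := by
  have ha0 := S.pos_of_distortion_add_mul_lt ha
  have hl : 0 ≤ l ^ r := Real.rpow_nonneg S.contraction_nonneg r
  have hθ : 0 ≤ (D + a * l ^ r) / a := by have := S.distortion_nonneg; positivity
  have hθ1 : (D + a * l ^ r) / a < 1 := (div_lt_one ha0).2 ha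
  have hδ0 := mul_pos (sub_pos.2 hθ1) (Real.exp_pos (-(2 * a)))
  refine ⟨Real.exp a, 1 - (1 - (D + a * l ^ r) / a) * Real.exp (-(2 * a)),
    sub_nonneg.2 (one_sub_mul_exp_lt_one ha0 hθ).le, sub_lt_self 1 hδ0,
    fun u v hu hv huv n => ?_⟩
  obtain hu0 | hu0 := (show 0 ≤ ∫ x, u x ∂P from integral_nonneg hu.nonneg).eq_or_lt
  · rw [hu.eq_zero_of_integral_eq_zero S.dist_le_one S.exponent_pos.le ha0.le hu0.symm,
      hv.eq_zero_of_integral_eq_zero S.dist_le_one S.exponent_pos.le ha0.le (huv ▸ hu0.symm)]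
    simp
  · have hI := inv_nonneg.2 hu0.le
    have hnorm := S.norm_transferOperator_pow_sub_le ha0 hθ hθ1 (div_mul_cancel₀ _ ha0.ne').ge n
      (hu.smul hI) (hv.smul hI)
      (by simp only [ContinuousMap.smul_apply, smul_eq_mul, integral_const_mul,
        inv_mul_cancel₀ hu0.ne'])
      (by simp only [ContinuousMap.smul_apply, smul_eq_mul, integral_const_mul, ← huv,
        inv_mul_cancel₀ hu0.ne'])
    rw [map_smul, map_smul, ← smul_sub, norm_smul, Real.norm_of_nonneg hI,
      inv_mul_le_iff₀ hu0] at hnorm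
    exact hnorm.trans_eq (by ring)

theorem exists_invariant_density (ha : D + a * l ^ r < a) :
    ∃ ρ : C(X, ℝ), IsLogHolder a r ρ ∧ transferOperator h w ρ = ρ ∧ ∫ x, ρ x ∂P = 1 := by
  have ha0 := (S.pos_of_distortion_add_mul_lt ha).le
  obtain ⟨K, q, -, hq1, hK⟩ := S.exists_norm_transferOperator_pow_sub_le ha
  set u : C(X, ℝ) := ContinuousMap.const X 1
  have hu : IsLogHolder a r u := .const ha0 zero_le_one
  have hcauchy : CauchySeq fun n => (transferOperator h w ^ n) u := by
    refine cauchySeq_of_le_geometric q (K * ∫ x, u x ∂P) hq1 fun n => ?_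
    rw [dist_eq_norm, pow_succ]
    exact hK u _ hu (S.isLogHolder_transferOperator_pow ha hu 1)
      (S.integral_transferOperator u).symm n
  obtain ⟨ρ, hρ⟩ := cauchySeq_tendsto_of_complete hcauchy
  refine ⟨ρ, .of_tendsto hρ (S.isLogHolder_transferOperator_pow ha hu), ?_, ?_⟩
  · refine tendsto_nhds_unique (((transferOperator h w).continuous.tendsto ρ).comp hρ)
      (((tendsto_add_atTop_iff_nat 1).2 hρ).congr fun n => ?_)
    rw [pow_succ']; rfl
  · refine tendsto_nhds_unique ((continuous_integral_continuousMap.tendsto ρ).comp hρ)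
      (tendsto_const_nhds.congr fun n => ?_)
    rw [Function.comp_apply, S.integral_transferOperator_pow]
    simp [u]

end IsFullBranchSystem

end Contraction

section InvariantMeasure

open scoped Topology ENNReal ProbabilityTheory

lemma ae_mem_of_setIntegral_eq {X : Type*} [PseudoEMetricSpace X] [MeasurableSpace X] [BorelSpace X]
    {P : Measure X} [IsProbabilityMeasure P] {A : Set X} (hA0 : P A ≠ 0) (hA : MeasurableSet A)
    (h : ∀ u : X → ℝ, (∃ K, LipschitzWith K u) → (∃ C, ∀ x y, dist (u x) (u y) ≤ C) →
      ∫ x in A, u x ∂P = (∫ x, u x ∂P) * P.real A) : ∀ᵐ x ∂P, x ∈ A := by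
  have := ProbabilityTheory.cond_isProbabilityMeasure hA0
  let PA : ProbabilityMeasure X := ⟨P[|A], this⟩
  let P' : ProbabilityMeasure X := ⟨P, inferInstance⟩
  have hlim : Tendsto (fun _ : ℕ => PA) atTop (𝓝 P') := by
    refine tendsto_iff_forall_lipschitz_integral_tendsto.2 fun u hu hK => ?_
    refine tendsto_const_nhds.congr' (.of_forall fun _ => ?_)
    change ∫ x, u x ∂P = ∫ x, u x ∂P[|A]
    rw [ProbabilityTheory.cond, integral_smul_measure, h u hK hu, ENNReal.toReal_inv, smul_eq_mul,
      mul_comm, mul_assoc]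
    change _ = _ * (P.real A * (P.real A)⁻¹)
    rw [mul_inv_cancel₀ (by simpa [measureReal_eq_zero_iff] using hA0), mul_one]
  have hPA : PA = P' := tendsto_nhds_unique tendsto_const_nhds hlim
  rw [← show P[|A] = P from congrArg Subtype.val hPA]
  exact ProbabilityTheory.ae_cond_mem hA

namespace IsFullBranchSystem

variable {X : Type*} [PseudoMetricSpace X] [CompactSpace X] [MeasurableSpace X] [BorelSpace X]
  {P : Measure X} {f : X → X} {κ : X → ℕ} {h : ℕ → C(X, X)} {w : ℕ → C(X, ℝ)} {l D r a : ℝ}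
  (S : IsFullBranchSystem P f κ h w l D r)

include S

section Finite

variable [IsFiniteMeasure P]

lemma measurePreserving_inducedMap {ρ : C(X, ℝ)} (hρ : ∀ x, 0 ≤ ρ x)
    (hL : transferOperator h w ρ = ρ) :
    MeasurePreserving (inducedMap f κ) (densityMeasure P ρ) (densityMeasure P ρ) := by
  refine ⟨S.measurable_inducedMap, Measure.ext fun A hA => ?_⟩
  have hint := integrable_continuousMap (P := P) ρ
  rw [Measure.map_apply S.measurable_inducedMap hA,
    densityMeasure_apply hρ (S.measurable_inducedMap hA) hint.integrableOn,
    densityMeasure_apply hρ hA hint.integrableOn,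
    S.setIntegral_preimage_inducedMap_continuousMap ρ hA, hL]

lemma setIntegral_transferOperator_pow {A : Set X} (hA : MeasurableSet A)
    (hGA : inducedMap f κ ⁻¹' A = A) (u : C(X, ℝ)) (n : ℕ) :
    ∫ x in A, (transferOperator h w ^ n) u x ∂P = ∫ x in A, u x ∂P := by
  induction n with
  | zero => rfl
  | succ n ih =>
    rw [pow_succ', mul_apply_eq_comp, ← S.setIntegral_preimage_inducedMap_continuousMap _ hA, hGA,
      ih]

end Finite

variable [IsProbabilityMeasure P]

lemma tendsto_transferOperator_pow (ha : D + a * l ^ r < a) {ρ u : C(X, ℝ)}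
    (hρ : IsLogHolder a r ρ) (hL : transferOperator h w ρ = ρ) (hρ1 : ∫ x, ρ x ∂P = 1)
    (hu : IsLogHolder a r u) :
    Tendsto (fun n => (transferOperator h w ^ n) u) atTop (𝓝 ((∫ x, u x ∂P) • ρ)) := by
  obtain ⟨K, q, hq, hq1, hK⟩ := S.exists_norm_transferOperator_pow_sub_le ha
  have hfix (n : ℕ) : (transferOperator h w ^ n) ρ = ρ := by
    induction n with
    | zero => rfl
    | succ n ih => rw [pow_succ, mul_apply_eq_comp, hL, ih]
  rw [tendsto_iff_norm_sub_tendsto_zero]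
  refine squeeze_zero (fun _ => norm_nonneg _) (fun n => ?_)
    (by simpa using (tendsto_pow_atTop_nhds_zero_of_lt_one hq hq1).const_mul (K * ∫ x, u x ∂P))
  have hn := hK u ((∫ x, u x ∂P) • ρ) hu (hρ.smul (integral_nonneg hu.nonneg))
    (by simp only [ContinuousMap.smul_apply, smul_eq_mul, integral_const_mul, hρ1, mul_one]) n
  rwa [map_smul, hfix] at hn

section InvariantSet

variable {A : Set X} (hA : MeasurableSet A) (hGA : inducedMap f κ ⁻¹' A = A)

include hA hGA

lemma setIntegral_eq_mul_measureReal_of_isLogHolder (ha : D + a * l ^ r < a) {u : C(X, ℝ)}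
    (hu : IsLogHolder a r u) : ∫ x in A, u x ∂P = (∫ x, u x ∂P) * P.real A := by
  obtain ⟨ρ, hρ, hL, hρ1⟩ := S.exists_invariant_density ha
  have hmul (v : C(X, ℝ)) (hv : IsLogHolder a r v) :
      ∫ x in A, v x ∂P = (∫ x, v x ∂P) * ∫ x in A, ρ x ∂P := by
    have hlim := (continuous_integral_continuousMap (P := P.restrict A)).tendsto _ |>.comp
      (S.tendsto_transferOperator_pow ha hρ hL hρ1 hv)
    simp only [ContinuousMap.smul_apply, smul_eq_mul, integral_const_mul] at hlim
    exact tendsto_nhds_unique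
      (tendsto_const_nhds.congr fun n => (S.setIntegral_transferOperator_pow hA hGA v n).symm) hlim
  have hone := hmul _ (.const (S.pos_of_distortion_add_mul_lt ha).le zero_le_one)
  simp only [ContinuousMap.const_apply, integral_const, probReal_univ, smul_eq_mul, one_mul,
    mul_one, measureReal_restrict_apply_univ] at hone
  rw [hmul u hu, ← hone]

lemma setIntegral_eq_mul_measureReal_of_abs_sub_le {C : ℝ} (hC : 0 ≤ C) {u : C(X, ℝ)}
    (hu : ∀ x y, |u x - u y| ≤ C * dist x y ^ r) :
    ∫ x in A, u x ∂P = (∫ x, u x ∂P) * P.real A := by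
  obtain ⟨a, ha⟩ := S.exists_distortion_add_mul_lt
  have h := S.setIntegral_eq_mul_measureReal_of_isLogHolder hA hGA ha
    (.of_abs_sub_le (S.pos_of_distortion_add_mul_lt ha) hC hu le_rfl)
  simp only [ContinuousMap.add_apply, ContinuousMap.const_apply] at h
  rw [integral_add (integrable_continuousMap u) (integrable_const _),
    integral_add (integrable_continuousMap u) (integrable_const _), integral_const, integral_const,
    measureReal_restrict_apply_univ, probReal_univ, smul_eq_mul, smul_eq_mul] at h
  linarith

lemma ae_mem_or_ae_notMem_of_preimage_eq : (∀ᵐ x ∂P, x ∈ A) ∨ ∀ᵐ x ∂P, x ∉ A := by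
  by_cases hA0 : P A = 0
  · exact .inr (measure_eq_zero_iff_ae_notMem.1 hA0)
  · refine .inl (ae_mem_of_setIntegral_eq hA0 hA fun u ⟨K, hK⟩ _ => ?_)
    refine S.setIntegral_eq_mul_measureReal_of_abs_sub_le hA hGA K.coe_nonneg
      (u := ⟨u, hK.continuous⟩) fun x y => (hK.dist_le_mul x y).trans ?_
    exact mul_le_mul_of_nonneg_left (Real.self_le_rpow_of_le_one dist_nonneg (S.dist_le_one x y)
      S.exponent_le_one) K.coe_nonneg

end InvariantSet

theorem ergodic_inducedMap {ρ : C(X, ℝ)} (hρ : ∀ x, 0 ≤ ρ x) (hL : transferOperator h w ρ = ρ) :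
    Ergodic (inducedMap f κ) (densityMeasure P ρ) := by
  refine ⟨S.measurePreserving_inducedMap hρ hL, ⟨fun A hA hGA => ?_⟩⟩
  rw [eventuallyConst_set]
  exact (S.ae_mem_or_ae_notMem_of_preimage_eq hA hGA).imp
    (fun h => densityMeasure_absolutelyContinuous.ae_le h)
    (fun h => densityMeasure_absolutelyContinuous.ae_le h)

end IsFullBranchSystem

end InvariantMeasure

section BranchSum

open scoped Topology ENNReal

section Def

variable {X : Type*} [TopologicalSpace X]

/-- The sum `∑ᵢ φ ∘ hᵢ` over `i ≤ k`. In a full-branch system it is the Birkhoff sum of `φ` along an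
excursion of height `k`, as a function of the endpoint of the excursion. -/
def branchSum (h : ℕ → C(X, X)) (φ : C(X, ℝ)) (k : ℕ) : C(X, ℝ) :=
  ∑ i ∈ Finset.range (k + 1), φ.comp (h i)

lemma branchSum_apply (h : ℕ → C(X, X)) (φ : C(X, ℝ)) (k : ℕ) (y : X) :
    branchSum h φ k y = ∑ i ∈ Finset.range (k + 1), φ (h i y) :=
  ContinuousMap.sum_apply _ _ y

lemma branchSum_add (h : ℕ → C(X, X)) (φ ψ : C(X, ℝ)) (k : ℕ) :
    branchSum h (φ + ψ) k = branchSum h φ k + branchSum h ψ k := by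
  ext y
  simp only [branchSum_apply, ContinuousMap.add_apply, Finset.sum_add_distrib]

variable [CompactSpace X]

lemma norm_branchSum_le (h : ℕ → C(X, X)) (φ : C(X, ℝ)) (k : ℕ) :
    ‖branchSum h φ k‖ ≤ ((k : ℝ) + 1) * ‖φ‖ := by
  refine (norm_sum_le_of_le _ fun i _ => norm_continuousMap_comp_le φ (h i)).trans_eq ?_
  simp

/-- The image under the transfer operator of `ρ` times the Birkhoff sum of `φ` over an excursion;
the latter is unbounded, but its transfer is a continuous function. -/
noncomputable def transferBranchSum (h : ℕ → C(X, X)) (w : ℕ → C(X, ℝ)) (ρ φ : C(X, ℝ)) :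
    C(X, ℝ) :=
  ∑' k, w k * (ρ.comp (h k) * branchSum h φ k)

end Def

namespace IsFullBranchSystem

variable {X : Type*} [PseudoMetricSpace X] [CompactSpace X] [MeasurableSpace X]
  {P : Measure X} {f : X → X} {κ : X → ℕ} {h : ℕ → C(X, X)} {w : ℕ → C(X, ℝ)} {l D r a b : ℝ}
  {ρ φ χ : C(X, ℝ)} (S : IsFullBranchSystem P f κ h w l D r)

include S

lemma summable_norm_mul_branchSum (ρ φ : C(X, ℝ)) :
    Summable fun k => ‖w k * (ρ.comp (h k) * branchSum h φ k)‖ := by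
  refine .of_nonneg_of_le (fun k => norm_nonneg _) (fun k => ?_)
    (S.summable_mul_norm_weight.mul_right (‖ρ‖ * ‖φ‖))
  calc ‖w k * (ρ.comp (h k) * branchSum h φ k)‖
      ≤ ‖w k‖ * (‖ρ.comp (h k)‖ * ‖branchSum h φ k‖) :=
        (norm_mul_le _ _).trans (mul_le_mul_of_nonneg_left (norm_mul_le _ _) (norm_nonneg _))
    _ ≤ ‖w k‖ * (‖ρ‖ * (((k : ℝ) + 1) * ‖φ‖)) := by
        gcongr
        exacts [norm_continuousMap_comp_le ρ _, norm_branchSum_le h φ k]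
    _ = ((k : ℝ) + 1) * ‖w k‖ * (‖ρ‖ * ‖φ‖) := by ring

lemma transferBranchSum_add (ρ φ ψ : C(X, ℝ)) :
    transferBranchSum h w ρ (φ + ψ) = transferBranchSum h w ρ φ + transferBranchSum h w ρ ψ := by
  simp only [transferBranchSum, branchSum_add, mul_add]
  exact (S.summable_norm_mul_branchSum ρ φ).of_norm.tsum_add
    (S.summable_norm_mul_branchSum ρ ψ).of_norm

lemma isLogHolder_transferBranchSum (ha : 0 ≤ a) (hb : 0 ≤ b) (hab : D + (a * l ^ r + b) ≤ a)
    (hρ : IsLogHolder a r ρ) (hφ : IsLogHolder b r φ) :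
    IsLogHolder a r (transferBranchSum h w ρ φ) := by
  refine (S.isLogHolder_tsum (S.summable_norm_mul_branchSum ρ φ) fun k => ?_).mono hab
  refine (S.isLogHolder_comp_branch ha hρ k).mul (.sum _ fun i _ => ?_)
  exact (S.isLogHolder_comp_branch hb hφ i).mono
    (mul_le_of_le_one_right hb S.rpow_contraction_lt_one.le)

lemma measurable_birkhoffSum_height {M : Type*} [AddCommMonoid M] [MeasurableSpace M]
    [MeasurableAdd₂ M] {u : X → M} (hu : Measurable u) :
    Measurable fun x => birkhoffSum f u (κ x + 1) x :=
  (measurable_from_prod_countable_right (f := fun p : ℕ × X => birkhoffSum f u p.1 p.2) fun n =>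
    measurable_birkhoffSum S.measurable_map hu n).comp
      ((S.measurable_height.add_const 1).prodMk measurable_id)

lemma ae_mul_birkhoffSum_branch (ρ φ : C(X, ℝ)) : ∀ᵐ y ∂P, ∀ k,
    ρ (h k y) * birkhoffSum f φ (κ (h k y) + 1) (h k y) = (ρ.comp (h k) * branchSum h φ k) y := by
  filter_upwards [S.birkhoffSum_branch φ] with y hy k
  rw [hy, ContinuousMap.mul_apply, branchSum_apply, ContinuousMap.comp_apply]

variable [BorelSpace X]

section Finite

variable [IsFiniteMeasure P]

lemma integrable_mul_birkhoffSum (ρ φ : C(X, ℝ)) :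
    Integrable (fun x => ρ x * birkhoffSum f φ (κ x + 1) x) P :=
  S.integrable_of_branches
    (ρ.measurable.mul (S.measurable_birkhoffSum_height φ.measurable))
    (S.ae_mul_birkhoffSum_branch ρ φ) (S.summable_norm_mul_branchSum ρ φ)

lemma setIntegral_preimage_mul_birkhoffSum (ρ φ : C(X, ℝ)) {A : Set X} (hA : MeasurableSet A) :
    ∫ x in inducedMap f κ ⁻¹' A, ρ x * birkhoffSum f φ (κ x + 1) x ∂P =
      ∫ x in A, transferBranchSum h w ρ φ x ∂P :=
  S.setIntegral_preimage_inducedMap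
    (ρ.measurable.mul (S.measurable_birkhoffSum_height φ.measurable))
    (S.ae_mul_birkhoffSum_branch ρ φ) (S.summable_norm_mul_branchSum ρ φ) hA

lemma integral_transferBranchSum (ρ φ : C(X, ℝ)) :
    ∫ x, transferBranchSum h w ρ φ x ∂P = ∫ x, ρ x * birkhoffSum f φ (κ x + 1) x ∂P := by
  rw [← setIntegral_univ, ← S.setIntegral_preimage_mul_birkhoffSum ρ φ .univ, preimage_univ,
    setIntegral_univ]

lemma integrable_mul_height_sq (ρ : C(X, ℝ)) :
    Integrable (fun x => ρ x * ((κ x : ℝ) + 1) ^ 2) P := by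
  have hκ : Measurable fun x => (κ x : ℝ) := measurable_from_top.comp S.measurable_height
  refine S.integrable_of_branches (u := fun k => ((k : ℝ) + 1) ^ 2 • ρ.comp (h k))
    (ρ.measurable.mul ((hκ.add_const 1).pow_const 2)) ?_ ?_
  · filter_upwards [S.height_branch] with y hy k
    rw [hy k, ContinuousMap.smul_apply, smul_eq_mul, mul_comm, ContinuousMap.comp_apply]
  · refine .of_nonneg_of_le (fun k => norm_nonneg _) (fun k => ?_)
      (S.summable_sq_mul_norm_weight.mul_right ‖ρ‖)
    rw [mul_smul_comm, norm_smul, Real.norm_of_nonneg (by positivity), mul_assoc]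
    gcongr
    exact (norm_mul_le _ _).trans
      (mul_le_mul_of_nonneg_left (norm_continuousMap_comp_le ρ _) (norm_nonneg _))

variable (hρ0 : ∀ x, 0 ≤ ρ x)

include hρ0

lemma memLp_two_birkhoffSum (φ : C(X, ℝ)) :
    MemLp (fun x => birkhoffSum f φ (κ x + 1) x) 2 (densityMeasure P ρ) := by
  have hκ : Measurable fun x => (κ x : ℝ) + 1 :=
    (measurable_from_top.comp S.measurable_height).add_const 1
  have hκ2 : MemLp (fun x => (κ x : ℝ) + 1) 2 (densityMeasure P ρ) :=
    (memLp_two_iff_integrable_sq hκ.aestronglyMeasurable).2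
      ((integrable_densityMeasure_iff hρ0 ρ.measurable).2 (S.integrable_mul_height_sq ρ))
  refine (hκ2.mul_const ‖φ‖).mono
    (S.measurable_birkhoffSum_height φ.measurable).aestronglyMeasurable (ae_of_all _ fun x => ?_)
  refine (norm_sum_le_of_le _ fun j _ => φ.norm_coe_le_norm _).trans ((le_abs_self _).trans_eq' ?_)
  simp

lemma lintegral_spreadMeasure_densityMeasure (hφ0 : ∀ x, 0 ≤ φ x) :
    ∫⁻ x, ENNReal.ofReal (φ x) ∂spreadMeasure f κ (densityMeasure P ρ) =
      ENNReal.ofReal (∫ x, transferBranchSum h w ρ φ x ∂P) := by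
  have hsum (x : X) : birkhoffSum f (fun x => ENNReal.ofReal (φ x)) (κ x + 1) x =
      ENNReal.ofReal (birkhoffSum f φ (κ x + 1) x) :=
    (ENNReal.ofReal_sum_of_nonneg fun _ _ => hφ0 _).symm
  rw [lintegral_spreadMeasure S.measurable_map S.measurable_height φ.measurable.ennreal_ofReal,
    S.integral_transferBranchSum ρ φ, ← integral_densityMeasure hρ0 ρ.measurable,
    ofReal_integral_eq_lintegral_ofReal
      ((integrable_densityMeasure_iff hρ0 ρ.measurable).2 (S.integrable_mul_birkhoffSum ρ φ))
      (ae_of_all _ fun x => Finset.sum_nonneg fun _ _ => hφ0 _)]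
  simp only [hsum]

variable (hL : transferOperator h w ρ = ρ)

include hL

/- The equation `hχ` is the Poisson equation; by duality it makes the induced Birkhoff sum of `φ`,
corrected by the coboundary of `χ`, a sequence of reverse martingale differences. -/
lemma setIntegral_preimage_birkhoffSum_sub_coboundary_eq_zero
    (hχ : ρ * χ = transferBranchSum h w ρ φ + transferOperator h w (ρ * χ)) {A : Set X}
    (hA : MeasurableSet A) :
    ∫ x in inducedMap f κ ⁻¹' A,
      (birkhoffSum f φ (κ x + 1) x - (χ (inducedMap f κ x) - χ x)) ∂densityMeasure P ρ = 0 := by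
  have hG := S.measurable_inducedMap hA
  have hinv := S.measurePreserving_inducedMap hρ0 hL
  have hiff {g : X → ℝ} := integrable_densityMeasure_iff (P := P) (g := g) hρ0 ρ.measurable
  have hiχ : Integrable χ (densityMeasure P ρ) := hiff.2 (integrable_continuousMap (ρ * χ))
  have hbirk : ∫ x in inducedMap f κ ⁻¹' A, birkhoffSum f φ (κ x + 1) x ∂densityMeasure P ρ =
      ∫ x in A, transferBranchSum h w ρ φ x ∂P := by
    rw [setIntegral_densityMeasure hρ0 ρ.measurable _ hG,
      S.setIntegral_preimage_mul_birkhoffSum ρ φ hA]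
  have hχG : ∫ x in inducedMap f κ ⁻¹' A, χ (inducedMap f κ x) ∂densityMeasure P ρ =
      ∫ x in A, (ρ * χ) x ∂P := by
    rw [← setIntegral_map hA χ.measurable.aestronglyMeasurable hinv.measurable.aemeasurable,
      hinv.map_eq, setIntegral_densityMeasure hρ0 ρ.measurable _ hA]
    rfl
  have hχ0 : ∫ x in inducedMap f κ ⁻¹' A, χ x ∂densityMeasure P ρ =
      ∫ x in A, transferOperator h w (ρ * χ) x ∂P := by
    rw [setIntegral_densityMeasure hρ0 ρ.measurable _ hG,
      ← S.setIntegral_preimage_inducedMap_continuousMap _ hA]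
    rfl
  have hiχG : Integrable (fun x => χ (inducedMap f κ x)) (densityMeasure P ρ) :=
    hinv.integrable_comp_of_integrable hiχ
  have hicob : Integrable (fun x => χ (inducedMap f κ x) - χ x) (densityMeasure P ρ) :=
    hiχG.sub hiχ
  have hpoisson : ∫ x in A, (ρ * χ) x ∂P =
      ∫ x in A, transferBranchSum h w ρ φ x ∂P + ∫ x in A, transferOperator h w (ρ * χ) x ∂P := by
    rw [← integral_add (integrable_continuousMap _) (integrable_continuousMap _)]
    exact congrArg (fun u : C(X, ℝ) => ∫ x in A, u x ∂P) hχ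
  rw [integral_sub (hiff.2 (S.integrable_mul_birkhoffSum ρ φ)).integrableOn hicob.integrableOn,
    integral_sub hiχG.integrableOn hiχ.integrableOn, hbirk, hχG, hχ0, hpoisson]
  ring

end Finite

variable [IsProbabilityMeasure P]

lemma exists_eq_sub_add_transferOperator (ha : D + a * l ^ r < a) {u v : C(X, ℝ)}
    (hu : IsLogHolder a r u) (hv : IsLogHolder a r v) (huv : ∫ x, u x ∂P = ∫ x, v x ∂P) :
    ∃ ψ : C(X, ℝ), ψ = u - v + transferOperator h w ψ := by
  obtain ⟨K, q, hq, hq1, hK⟩ := S.exists_norm_transferOperator_pow_sub_le ha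
  have hsum : Summable fun n => (transferOperator h w ^ n) (u - v) :=
    .of_norm_bounded ((summable_geometric_of_lt_one hq hq1).mul_left _) fun n => by
      simpa only [map_sub] using hK u v hu hv huv n
  refine ⟨∑' n, (transferOperator h w ^ n) (u - v), ?_⟩
  rw [(transferOperator h w).map_tsum hsum, hsum.tsum_eq_zero_add]
  simp only [pow_zero, one_apply_eq_self, pow_succ', mul_apply_eq_comp]

end IsFullBranchSystem

end BranchSum

section FullBranchLimit

open ProbabilityTheory
open scoped Topology ENNReal

lemma transferBranchSum_smul {X : Type*} [TopologicalSpace X] (h : ℕ → C(X, X))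
    (w : ℕ → C(X, ℝ)) (c : ℝ) (ρ φ : C(X, ℝ)) :
    transferBranchSum h w (c • ρ) φ = c • transferBranchSum h w ρ φ := by
  simp only [transferBranchSum, ContinuousMap.smul_comp, smul_mul_assoc, mul_smul_comm,
    tsum_const_smul'']

namespace IsFullBranchSystem

variable {X : Type*} [PseudoMetricSpace X] [CompactSpace X] [MeasurableSpace X] [BorelSpace X]
  {P : Measure X} [IsProbabilityMeasure P] {f : X → X} {κ : X → ℕ} {h : ℕ → C(X, X)}
  {w : ℕ → C(X, ℝ)} {l D r a : ℝ} {ρ φ : C(X, ℝ)} (S : IsFullBranchSystem P f κ h w l D r)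

include S

lemma integral_le_integral_transferBranchSum_one (hρ : ∀ x, 0 ≤ ρ x) :
    ∫ x, ρ x ∂P ≤ ∫ x, transferBranchSum h w ρ 1 x ∂P := by
  rw [S.integral_transferBranchSum]
  refine integral_mono (integrable_continuousMap ρ) (S.integrable_mul_birkhoffSum ρ 1) fun x =>
    le_mul_of_one_le_right (hρ x) ?_
  simp [birkhoffSum]

lemma exists_pos_invariant_density_isProbabilityMeasure (ha : D + a * l ^ r < a) :
    ∃ ρ : C(X, ℝ), IsLogHolder a r ρ ∧ (∀ x, 0 < ρ x) ∧ transferOperator h w ρ = ρ ∧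
      IsProbabilityMeasure (spreadMeasure f κ (densityMeasure P ρ)) := by
  obtain ⟨ρ, hρ, hL, hρ1⟩ := S.exists_invariant_density ha
  have ha0 := (S.pos_of_distortion_add_mul_lt ha).le
  have hpos (x : X) : 0 < ρ x := by
    have hlow := hρ.exp_neg_mul_integral_le S.dist_le_one S.exponent_pos.le ha0 (P := P) x
    rw [hρ1, mul_one] at hlow
    exact (Real.exp_pos _).trans_le hlow
  set Z := ∫ x, transferBranchSum h w ρ 1 x ∂P
  have hZ : 0 < Z := zero_lt_one.trans_le
    (hρ1.symm.trans_le (S.integral_le_integral_transferBranchSum_one hρ.nonneg))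
  have hsρ : IsLogHolder a r (Z⁻¹ • ρ) := hρ.smul (inv_nonneg.2 hZ.le)
  refine ⟨Z⁻¹ • ρ, hsρ, fun x => mul_pos (inv_pos.2 hZ) (hpos x), by rw [map_smul, hL], ⟨?_⟩⟩
  have hmass := S.lintegral_spreadMeasure_densityMeasure (φ := 1) hsρ.nonneg fun _ => zero_le_one
  simp only [ContinuousMap.one_apply, ENNReal.ofReal_one, lintegral_one, transferBranchSum_smul,
    ContinuousMap.smul_apply, integral_smul] at hmass
  rw [hmass, smul_eq_mul, inv_mul_cancel₀ hZ.ne', ENNReal.ofReal_one]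

/- The transfers of `φ + M` and of the constant `M` lie in the cone `IsLogHolder a r`, where powers
of the transfer operator contract, and their difference is the transfer of `φ`. -/
lemma exists_eq_transferBranchSum_add_transferOperator (ha : D + a * l ^ r < a)
    (hρ : IsLogHolder a r ρ) [IsProbabilityMeasure (spreadMeasure f κ (densityMeasure P ρ))] {C : ℝ}
    (hC : 0 ≤ C) (hφ : ∀ x y, |φ x - φ y| ≤ C * dist x y ^ r)
    (hφ0 : ∫ x, φ x ∂spreadMeasure f κ (densityMeasure P ρ) = 0) :
    ∃ ψ : C(X, ℝ), ψ = transferBranchSum h w ρ φ + transferOperator h w ψ := by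
  have ha0 := (S.pos_of_distortion_add_mul_lt ha).le
  set b := a - D - a * l ^ r with hb
  have hb0 : 0 < b := by linarith [hb]
  have hab : D + (a * l ^ r + b) ≤ a := by linarith [hb]
  set M := ContinuousMap.const X (C / b + ‖φ‖)
  have hφM : IsLogHolder b r (φ + M) := .of_abs_sub_le hb0 hC hφ le_rfl
  have hM : IsLogHolder b r M := .const hb0.le (by positivity)
  have hmean : ∫ x, (φ + M) x ∂spreadMeasure f κ (densityMeasure P ρ) =
      ∫ x, M x ∂spreadMeasure f κ (densityMeasure P ρ) := by
    simp only [ContinuousMap.add_apply]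
    rw [integral_add (integrable_continuousMap φ) (integrable_continuousMap M), hφ0, zero_add]
  have hint {u : C(X, ℝ)} (hu : IsLogHolder b r u) : ∫ x, transferBranchSum h w ρ u x ∂P =
      ∫ x, u x ∂spreadMeasure f κ (densityMeasure P ρ) := by
    have hVu := S.isLogHolder_transferBranchSum ha0 hb0.le hab hρ hu
    refine (ENNReal.ofReal_eq_ofReal_iff (integral_nonneg hVu.nonneg)
      (integral_nonneg hu.nonneg)).1 ?_
    rw [← S.lintegral_spreadMeasure_densityMeasure hρ.nonneg hu.nonneg,
      ofReal_integral_eq_lintegral_ofReal (integrable_continuousMap u) (ae_of_all _ hu.nonneg)]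
  obtain ⟨ψ, hψ⟩ := S.exists_eq_sub_add_transferOperator ha
    (S.isLogHolder_transferBranchSum ha0 hb0.le hab hρ hφM)
    (S.isLogHolder_transferBranchSum ha0 hb0.le hab hρ hM)
    ((hint hφM).trans (hmean.trans (hint hM).symm))
  refine ⟨ψ, ?_⟩
  rwa [S.transferBranchSum_add, add_sub_cancel_right] at hψ

lemma exists_tendstoInDistribution_spreadMeasure (hpos : ∀ x, 0 < ρ x)
    (hL : transferOperator h w ρ = ρ)
    [IsProbabilityMeasure (spreadMeasure f κ (densityMeasure P ρ))] {ψ : C(X, ℝ)}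
    (hψ : ψ = transferBranchSum h w ρ φ + transferOperator h w ψ) :
    ∃ v : ℝ≥0, TendstoInDistribution (fun (n : ℕ) x => (√n)⁻¹ * birkhoffSum f φ n x) atTop id
      (fun _ => spreadMeasure f κ (densityMeasure P ρ)) (gaussianReal 0 v) := by
  have hρ0 (x : X) := (hpos x).le
  have hG := S.measurePreserving_inducedMap hρ0 hL
  have : IsFiniteMeasure (densityMeasure P ρ) :=
    isFiniteMeasure_withDensity_ofReal (integrable_continuousMap ρ).2
  let χ : C(X, ℝ) := ⟨fun x => ψ x / ρ x, ψ.continuous.div ρ.continuous fun x => (hpos x).ne'⟩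
  have hχ : ρ * χ = ψ := by
    ext x
    exact mul_div_cancel₀ _ (hpos x).ne'
  have hχ2 : MemLp χ 2 (densityMeasure P ρ) :=
    .of_bound χ.measurable.aestronglyMeasurable ‖χ‖ (ae_of_all _ χ.norm_coe_le_norm)
  exact ⟨_, tendstoInDistribution_inv_sqrt_mul_birkhoffSum_spreadMeasure S.measurable_map
    S.measurable_height (S.ergodic_inducedMap hρ0 hL) φ.measurable χ.measurable
    ((S.measurable_birkhoffSum_height φ.measurable).sub
      ((χ.measurable.comp S.measurable_inducedMap).sub χ.measurable))
    ((S.memLp_two_birkhoffSum hρ0 φ).sub ((hχ2.comp_measurePreserving hG).sub hχ2))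
    (fun A hA => S.setIntegral_preimage_birkhoffSum_sub_coboundary_eq_zero hρ0 hL
      (by rwa [hχ]) hA)
    (ae_of_all _ fun x => (sub_add_cancel _ _).symm)⟩

theorem exists_ergodic_tendstoInDistribution {C : ℝ} (hC : 0 ≤ C)
    (hφ : ∀ x y, |φ x - φ y| ≤ C * dist x y ^ r) :
    ∃ (ν : Measure X) (_ : IsProbabilityMeasure ν), Ergodic f ν ∧ P ≪ ν ∧
      (∫ x, φ x ∂ν = 0 → ∃ v : ℝ≥0, TendstoInDistribution
        (fun (n : ℕ) x => (√n)⁻¹ * birkhoffSum f φ n x) atTop id (fun _ => ν)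
          (gaussianReal 0 v)) := by
  obtain ⟨a, ha⟩ := S.exists_distortion_add_mul_lt
  obtain ⟨ρ, hρ, hpos, hL, hν⟩ := S.exists_pos_invariant_density_isProbabilityMeasure ha
  refine ⟨spreadMeasure f κ (densityMeasure P ρ), hν,
    ergodic_spreadMeasure S.measurable_map S.measurable_height (S.ergodic_inducedMap hρ.nonneg hL),
    (absolutelyContinuous_densityMeasure ρ.measurable hpos).trans
      (absolutelyContinuous_spreadMeasure S.measurable_map S.measurable_height), fun hφ0 => ?_⟩
  obtain ⟨ψ, hψ⟩ := S.exists_eq_transferBranchSum_add_transferOperator ha hρ hC hφ hφ0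
  exact S.exists_tendstoInDistribution_spreadMeasure hpos hL hψ

end IsFullBranchSystem

end FullBranchLimit

section LeftBranch

open scoped Topology

/-- The left branch `y ↦ y(1 + 2^z y^z)` of the map `lsv z`, extended to `ℝ` as an odd function so
that it becomes an increasing bijection. -/
noncomputable def lsvLeft (z x : ℝ) : ℝ := x * (1 + 2 ^ z * |x| ^ z)

/-- The derivative of `lsvLeft z`. -/
noncomputable def lsvLeftDeriv (z x : ℝ) : ℝ := 1 + (1 + z) * (2 ^ z * |x| ^ z)

variable {z x y : ℝ}

lemma lsvLeft_of_nonneg (hx : 0 ≤ x) : lsvLeft z x = x * (1 + 2 ^ z * x ^ z) := by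
  rw [lsvLeft, abs_of_nonneg hx]

lemma lsvLeft_neg (z x : ℝ) : lsvLeft z (-x) = -lsvLeft z x := by
  rw [lsvLeft, lsvLeft, abs_neg, neg_mul]

lemma lsvLeft_zero (z : ℝ) : lsvLeft z 0 = 0 := zero_mul _

lemma lsvLeft_one_half (z : ℝ) : lsvLeft z (1 / 2) = 1 := by
  rw [lsvLeft_of_nonneg (by norm_num), ← Real.mul_rpow (by norm_num) (by norm_num)]
  norm_num

lemma hasDerivAt_lsvLeft (hx : 0 < x) : HasDerivAt (lsvLeft z) (lsvLeftDeriv z x) x := by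
  have hmul : HasDerivAt (fun x : ℝ => x * (1 + 2 ^ z * x ^ z))
      (1 * (1 + 2 ^ z * x ^ z) + x * (2 ^ z * (z * x ^ (z - 1)))) x :=
    (hasDerivAt_id x).mul
      (((Real.hasDerivAt_rpow_const (Or.inl hx.ne')).const_mul _).const_add _)
  have heq : lsvLeft z =ᶠ[𝓝 x] fun x : ℝ => x * (1 + 2 ^ z * x ^ z) :=
    (lt_mem_nhds hx).mono fun y hy => lsvLeft_of_nonneg (le_of_lt hy)
  refine (hmul.congr_of_eventuallyEq heq).congr_deriv ?_
  have hpow : x * x ^ (z - 1) = x ^ z := by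
    rw [Real.rpow_sub_one hx.ne', mul_div_cancel₀ _ hx.ne']
  rw [lsvLeftDeriv, abs_of_pos hx]
  linear_combination 2 ^ z * z * hpow

variable (hz : 0 < z)

include hz

lemma continuous_lsvLeft : Continuous (lsvLeft z) :=
  continuous_id.mul (continuous_const.add (continuous_const.mul
    (continuous_abs.rpow_const fun _ => Or.inr hz.le)))

lemma sub_le_lsvLeft_sub (hx : 0 ≤ x) (hxy : x ≤ y) : y - x ≤ lsvLeft z y - lsvLeft z x := by
  have hy := hx.trans hxy
  have hpow : x * (2 ^ z * x ^ z) ≤ y * (2 ^ z * y ^ z) := by gcongr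
  rw [lsvLeft_of_nonneg hx, lsvLeft_of_nonneg hy]
  linarith

lemma strictMono_lsvLeft : StrictMono (lsvLeft z) :=
  strictMono_of_odd_strictMonoOn_nonneg (lsvLeft_neg z) fun x hx y _ hxy => by
    linarith [sub_le_lsvLeft_sub hz hx hxy.le]

lemma surjective_lsvLeft : Function.Surjective (lsvLeft z) := by
  have htop : Tendsto (lsvLeft z) atTop atTop := by
    refine tendsto_atTop_mono' _ ?_ tendsto_id
    filter_upwards [eventually_ge_atTop (0 : ℝ)] with x hx
    simpa only [id_eq, lsvLeft_zero, sub_zero] using sub_le_lsvLeft_sub hz le_rfl hx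
  refine (continuous_lsvLeft hz).surjective htop ?_
  refine (tendsto_neg_atTop_atBot.comp (htop.comp tendsto_neg_atBot_atTop)).congr fun x => ?_
  rw [Function.comp_apply, Function.comp_apply, lsvLeft_neg, neg_neg]

lemma continuous_lsvLeftDeriv : Continuous (lsvLeftDeriv z) :=
  continuous_const.add (continuous_const.mul (continuous_const.mul
    (continuous_abs.rpow_const fun _ => Or.inr hz.le)))

lemma lsvLeftDeriv_pos (x : ℝ) : 0 < lsvLeftDeriv z x := by
  unfold lsvLeftDeriv
  positivity

lemma monotoneOn_lsvLeftDeriv : MonotoneOn (lsvLeftDeriv z) (Ici 0) := fun x hx y _ hxy => by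
  unfold lsvLeftDeriv
  have := abs_le_abs_of_nonneg hx hxy
  gcongr

/- For `t = (2x)^z` the two sides are values of `(lsvLeft z x / x)² / lsvLeftDeriv z x`, whose
monotonicity in `x` controls the distortion of the left branch. -/
lemma sq_one_add_div_le_sq_one_add_div {s t : ℝ} (hz1 : z ≤ 1) (hs : 0 ≤ s) (hst : s ≤ t) :
    (1 + s) ^ 2 / (1 + (1 + z) * s) ≤ (1 + t) ^ 2 / (1 + (1 + z) * t) := by
  have ht := hs.trans hst
  rw [div_le_div_iff₀ (by positivity) (by positivity)]
  have hdiff : 0 ≤ (t - s) * ((1 - z) + (s + t) + (1 + z) * s * t) :=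
    mul_nonneg (sub_nonneg.2 hst)
      (add_nonneg (add_nonneg (sub_nonneg.2 hz1) (by positivity)) (by positivity))
  linarith

/- Along backward orbits of the left branch `x ^ (-z)` thus grows at least linearly, so that these
orbits decay at least as fast as `n ^ (-1 / z)`. -/
lemma rpow_neg_lsvLeft_add_le (hx : 0 < x) (hx2 : x ≤ 1 / 2) :
    lsvLeft z x ^ (-z) + z / 2 ≤ x ^ (-z) := by
  set t := (2 : ℝ) ^ z * x ^ z
  have htpow : t = (2 * x) ^ z := (Real.mul_rpow zero_le_two hx.le).symm
  have ht0 : 0 < t := by positivity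
  have ht1 : t ≤ 1 := htpow ▸ Real.rpow_le_one (by positivity) (by linarith) hz.le
  have hL : lsvLeft z x = x * (1 + t) := lsvLeft_of_nonneg hx.le
  have hL0 : 0 < lsvLeft z x := hL ▸ mul_pos hx (by linarith)
  have hLt : 1 ≤ lsvLeft z x ^ (-z) * t := by
    have hL2 : lsvLeft z x ≤ 2 * x := by rw [hL]; nlinarith
    rw [Real.rpow_neg hL0.le, htpow, ← div_eq_inv_mul, one_le_div (by positivity)]
    exact Real.rpow_le_rpow hL0.le hL2 hz.le
  have hbern : 1 + z * (t / 2) ≤ (1 + t) ^ z := by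
    have hlog : t / 2 ≤ Real.log (1 + t) := by
      refine le_trans ?_ (Real.le_log_one_add_of_nonneg ht0.le)
      rw [div_le_div_iff₀ two_pos (by positivity)]
      nlinarith
    rw [Real.rpow_def_of_pos (by positivity)]
    nlinarith [Real.add_one_le_exp (Real.log (1 + t) * z)]
  have hxL : x ^ (-z) = lsvLeft z x ^ (-z) * (1 + t) ^ z := by
    rw [hL, Real.mul_rpow hx.le (by positivity), mul_assoc, ← Real.rpow_add (by positivity),
      neg_add_cancel, Real.rpow_zero, mul_one]
  calc lsvLeft z x ^ (-z) + z / 2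
      ≤ lsvLeft z x ^ (-z) + z / 2 * (lsvLeft z x ^ (-z) * t) := by
        gcongr
        exact le_mul_of_one_le_right (by positivity) hLt
    _ = lsvLeft z x ^ (-z) * (1 + z * (t / 2)) := by ring
    _ ≤ lsvLeft z x ^ (-z) * (1 + t) ^ z := by gcongr
    _ = x ^ (-z) := hxL.symm

end LeftBranch

section LeftInverse

/-- The inverse of the left branch `lsvLeft z`. -/
noncomputable def lsvLeftInv {z : ℝ} (hz : 0 < z) : ℝ ≃o ℝ :=
  ((strictMono_lsvLeft hz).orderIsoOfSurjective (lsvLeft z) (surjective_lsvLeft hz)).symm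

variable {z : ℝ} (hz : 0 < z) {s t : ℝ}

lemma lsvLeft_lsvLeftInv (s : ℝ) : lsvLeft z (lsvLeftInv hz s) = s :=
  ((strictMono_lsvLeft hz).orderIsoOfSurjective _ (surjective_lsvLeft hz)).apply_symm_apply s

lemma lsvLeftInv_lsvLeft (x : ℝ) : lsvLeftInv hz (lsvLeft z x) = x :=
  ((strictMono_lsvLeft hz).orderIsoOfSurjective _ (surjective_lsvLeft hz)).symm_apply_apply x

lemma lsvLeftInv_zero : lsvLeftInv hz 0 = 0 := by
  simpa only [lsvLeft_zero] using lsvLeftInv_lsvLeft hz 0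

lemma lsvLeftInv_one : lsvLeftInv hz 1 = 1 / 2 := by
  simpa only [lsvLeft_one_half] using lsvLeftInv_lsvLeft hz (1 / 2)

lemma lsvLeftInv_pos (hs : 0 < s) : 0 < lsvLeftInv hz s :=
  (lsvLeftInv_zero hz).symm.trans_lt ((lsvLeftInv hz).strictMono hs)

lemma lsvLeftInv_nonneg (hs : 0 ≤ s) : 0 ≤ lsvLeftInv hz s :=
  (lsvLeftInv_zero hz).symm.trans_le ((lsvLeftInv hz).monotone hs)

lemma lsvLeftInv_sub_le (hs : 0 ≤ s) (hst : s ≤ t) :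
    lsvLeftInv hz t - lsvLeftInv hz s ≤ t - s := by
  simpa only [lsvLeft_lsvLeftInv] using
    sub_le_lsvLeft_sub hz (lsvLeftInv_nonneg hz hs) ((lsvLeftInv hz).monotone hst)

lemma lsvLeftInv_le (hs : 0 ≤ s) : lsvLeftInv hz s ≤ s := by
  simpa only [lsvLeftInv_zero, sub_zero] using lsvLeftInv_sub_le hz le_rfl hs

lemma hasDerivAt_lsvLeftInv (hs : 0 < s) :
    HasDerivAt (lsvLeftInv hz) (lsvLeftDeriv z (lsvLeftInv hz s))⁻¹ s :=
  .of_local_left_inverse (lsvLeftInv hz).continuous.continuousAt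
    (hasDerivAt_lsvLeft (lsvLeftInv_pos hz hs)) (lsvLeftDeriv_pos hz _).ne'
    (.of_forall (lsvLeft_lsvLeftInv hz))

/-- The derivative of the `k`-th iterate of `lsvLeftInv hz`. -/
noncomputable def lsvLeftInvIterDeriv : ℕ → ℝ → ℝ
  | 0, _ => 1
  | k + 1, s => lsvLeftInvIterDeriv k (lsvLeftInv hz s) * (lsvLeftDeriv z (lsvLeftInv hz s))⁻¹

lemma hasDerivAt_iterate_lsvLeftInv (k : ℕ) (hs : 0 < s) :
    HasDerivAt (lsvLeftInv hz)^[k] (lsvLeftInvIterDeriv hz k s) s := by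
  induction k generalizing s with
  | zero => exact hasDerivAt_id s
  | succ k ih => exact (ih (lsvLeftInv_pos hz hs)).comp s (hasDerivAt_lsvLeftInv hz hs)

lemma continuous_lsvLeftInvIterDeriv (k : ℕ) : Continuous (lsvLeftInvIterDeriv hz k) := by
  induction k with
  | zero => exact continuous_const
  | succ k ih =>
    have hG := (lsvLeftInv hz).continuous
    exact (ih.comp hG).mul
      (((continuous_lsvLeftDeriv hz).comp hG).inv₀ fun _ => (lsvLeftDeriv_pos hz _).ne')

lemma lsvLeftInvIterDeriv_pos (k : ℕ) (s : ℝ) : 0 < lsvLeftInvIterDeriv hz k s := by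
  induction k generalizing s with
  | zero => exact one_pos
  | succ k ih => exact mul_pos (ih _) (inv_pos.2 (lsvLeftDeriv_pos hz _))

lemma antitoneOn_lsvLeftInvIterDeriv (k : ℕ) : AntitoneOn (lsvLeftInvIterDeriv hz k) (Ici 0) := by
  induction k with
  | zero => exact antitoneOn_const
  | succ k ih =>
    intro s hs t ht hst
    have hG := (lsvLeftInv hz).monotone hst
    have hGs := lsvLeftInv_nonneg hz hs
    have hGt := lsvLeftInv_nonneg hz ht
    exact mul_le_mul (ih hGs hGt hG)
      (inv_anti₀ (lsvLeftDeriv_pos hz _) (monotoneOn_lsvLeftDeriv hz hGs hGt hG))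
      (inv_pos.2 (lsvLeftDeriv_pos hz _)).le (lsvLeftInvIterDeriv_pos hz k _).le

lemma sq_mul_lsvLeftInvIterDeriv_succ (k : ℕ) (hs : 0 ≤ s) :
    s ^ 2 * lsvLeftInvIterDeriv hz (k + 1) s =
      lsvLeftInv hz s ^ 2 * lsvLeftInvIterDeriv hz k (lsvLeftInv hz s) *
        ((1 + 2 ^ z * lsvLeftInv hz s ^ z) ^ 2 /
          (1 + (1 + z) * (2 ^ z * lsvLeftInv hz s ^ z))) := by
  have hG := lsvLeftInv_nonneg hz hs
  have hs_eq : lsvLeftInv hz s * (1 + 2 ^ z * lsvLeftInv hz s ^ z) = s := by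
    rw [← lsvLeft_of_nonneg hG, lsvLeft_lsvLeftInv]
  rw [lsvLeftInvIterDeriv, lsvLeftDeriv, abs_of_nonneg hG, div_eq_mul_inv]
  nth_rw 1 [← hs_eq]
  ring

lemma monotoneOn_sq_mul_lsvLeftInvIterDeriv (hz1 : z ≤ 1) (k : ℕ) :
    MonotoneOn (fun s => s ^ 2 * lsvLeftInvIterDeriv hz k s) (Ici 0) := by
  induction k with
  | zero =>
    intro s hs t _ hst
    simpa only [lsvLeftInvIterDeriv, mul_one] using pow_le_pow_left₀ hs hst 2
  | succ k ih =>
    intro s hs t ht hst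
    have hG := (lsvLeftInv hz).monotone hst
    have hGs := lsvLeftInv_nonneg hz hs
    have hGt := lsvLeftInv_nonneg hz ht
    simp only [sq_mul_lsvLeftInvIterDeriv_succ hz k hs, sq_mul_lsvLeftInvIterDeriv_succ hz k ht]
    refine mul_le_mul (ih hGs hGt hG)
      (sq_one_add_div_le_sq_one_add_div hz hz1 (by positivity) (by gcongr)) (by positivity)
      (mul_nonneg (sq_nonneg _) (lsvLeftInvIterDeriv_pos hz k _).le)

end LeftInverse

section Distortion

lemma le_exp_mul_of_monotoneOn_sq_mul {u : ℝ → ℝ} (hu0 : ∀ s, 0 ≤ u s)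
    (hanti : AntitoneOn u (Ici 0)) (hmono : MonotoneOn (fun s => s ^ 2 * u s) (Ici 0)) {s t : ℝ}
    (hs : 1 / 2 ≤ s) (ht : 1 / 2 ≤ t) : u s ≤ Real.exp (4 * |s - t|) * u t := by
  have hs0 : 0 < s := by linarith
  have ht0 : 0 ≤ t := by linarith
  rcases le_total t s with hts | hst
  · exact (hanti ht0 hs0.le hts).trans
      (le_mul_of_one_le_left (hu0 t) (Real.one_le_exp (by positivity)))
  · have hts : t ≤ s * Real.exp (2 * |s - t|) := by
      rw [abs_sub_comm, abs_of_nonneg (sub_nonneg.2 hst)]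
      nlinarith [Real.add_one_le_exp (2 * (t - s))]
    refine le_of_mul_le_mul_left ?_ (pow_pos hs0 2)
    calc s ^ 2 * u s ≤ t ^ 2 * u t := hmono hs0.le ht0 hst
      _ ≤ (s * Real.exp (2 * |s - t|)) ^ 2 * u t := by gcongr; exact hu0 t
      _ = s ^ 2 * (Real.exp (4 * |s - t|) * u t) := by
        rw [mul_pow, ← Real.exp_nat_mul]
        push_cast
        ring_nf

end Distortion

section Branches

open scoped Topology ENNReal

variable {z : ℝ} (hz : 0 < z)

/-- The inverse branches of the first return map of `lsv z`: `lsvBranch hz k` goes back through the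
right branch once and through the left branch `k` times. -/
noncomputable def lsvBranch (k : ℕ) (y : ℝ) : ℝ := (lsvLeftInv hz)^[k] ((y + 1) / 2)

/-- The derivative of `lsvBranch hz k`. -/
noncomputable def lsvWeight (k : ℕ) (y : ℝ) : ℝ := lsvLeftInvIterDeriv hz k ((y + 1) / 2) * (1 / 2)

variable (k : ℕ) {y y' : ℝ}

lemma lsvBranch_zero (y : ℝ) : lsvBranch hz 0 y = (y + 1) / 2 := rfl

lemma lsvBranch_succ (y : ℝ) : lsvBranch hz (k + 1) y = lsvLeftInv hz (lsvBranch hz k y) :=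
  Function.iterate_succ_apply' _ _ _

lemma lsvBranch_zero_one : lsvBranch hz 0 1 = 1 := by
  rw [lsvBranch_zero, add_self_div_two]

lemma continuous_lsvBranch : Continuous (lsvBranch hz k) :=
  ((lsvLeftInv hz).continuous.iterate k).comp (by fun_prop)

lemma strictMono_lsvBranch : StrictMono (lsvBranch hz k) :=
  ((lsvLeftInv hz).strictMono.iterate k).comp fun a b hab => by linarith

lemma surjective_lsvBranch : Function.Surjective (lsvBranch hz k) :=
  ((lsvLeftInv hz).surjective.iterate k).comp fun a => ⟨2 * a - 1, by ring⟩

lemma hasDerivAt_lsvBranch (hy : 0 ≤ y) :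
    HasDerivAt (lsvBranch hz k) (lsvWeight hz k y) y :=
  (hasDerivAt_iterate_lsvLeftInv hz k (by linarith)).comp y
    (((hasDerivAt_id y).add_const 1).div_const 2)

lemma lsvBranch_pos (hy : 0 ≤ y) : 0 < lsvBranch hz k y := by
  induction k with
  | zero => rw [lsvBranch_zero]; linarith
  | succ k ih => rw [lsvBranch_succ]; exact lsvLeftInv_pos hz ih

lemma antitone_lsvBranch (hy : 0 ≤ y) : Antitone fun k => lsvBranch hz k y :=
  antitone_nat_of_succ_le fun k => by
    rw [lsvBranch_succ]
    exact lsvLeftInv_le hz (lsvBranch_pos hz k hy).le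

lemma lsvBranch_le (hy : 0 ≤ y) : lsvBranch hz k y ≤ (y + 1) / 2 :=
  antitone_lsvBranch hz hy (Nat.zero_le k)

lemma lsvBranch_sub_le (hy : 0 ≤ y) (hyy' : y ≤ y') :
    lsvBranch hz k y' - lsvBranch hz k y ≤ 1 / 2 * (y' - y) := by
  induction k with
  | zero => rw [lsvBranch_zero, lsvBranch_zero]; linarith
  | succ k ih =>
    rw [lsvBranch_succ, lsvBranch_succ]
    exact (lsvLeftInv_sub_le hz (lsvBranch_pos hz k hy).le
      ((strictMono_lsvBranch hz k).monotone hyy')).trans ih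

lemma abs_lsvBranch_sub_le (hy : 0 ≤ y) (hy' : 0 ≤ y') :
    |lsvBranch hz k y - lsvBranch hz k y'| ≤ 1 / 2 * |y - y'| := by
  wlog hyy' : y' ≤ y generalizing y y'
  · rw [abs_sub_comm, abs_sub_comm y]
    exact this hy' hy (le_of_not_ge hyy')
  rw [abs_of_nonneg (sub_nonneg.2 hyy'),
    abs_of_nonneg (sub_nonneg.2 ((strictMono_lsvBranch hz k).monotone hyy'))]
  exact lsvBranch_sub_le hz k hy' hyy'

lemma lsvBranch_apply_zero : lsvBranch hz k 0 = lsvBranch hz (k + 1) 1 := by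
  rw [lsvBranch, lsvBranch, add_self_div_two, Function.iterate_succ_apply, lsvLeftInv_one, zero_add]

lemma lsvLeft_lsvBranch_succ (y : ℝ) : lsvLeft z (lsvBranch hz (k + 1) y) = lsvBranch hz k y := by
  rw [lsvBranch_succ, lsvLeft_lsvLeftInv]

lemma lsvBranch_succ_one_le : lsvBranch hz (k + 1) 1 ≤ 1 / 2 := by
  rw [← lsvBranch_apply_zero]
  exact (lsvBranch_le hz k le_rfl).trans_eq (by norm_num)

lemma lsvBranch_succ_lt (hy1 : y < 1) : lsvBranch hz (k + 1) y < 1 / 2 :=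
  (strictMono_lsvBranch hz (k + 1) hy1).trans_le (lsvBranch_succ_one_le hz k)

lemma lsvBranch_one_rpow_neg_ge (hz1 : z ≤ 1) :
    ((k : ℝ) + 1) * (z / 2) ≤ lsvBranch hz k 1 ^ (-z) := by
  induction k with
  | zero =>
    rw [lsvBranch_zero_one, Real.one_rpow]
    push_cast
    linarith
  | succ k ih =>
    have hstep := rpow_neg_lsvLeft_add_le hz (lsvBranch_pos hz (k + 1) zero_le_one)
      (lsvBranch_succ_one_le hz k)
    rw [lsvLeft_lsvBranch_succ] at hstep
    push_cast
    linarith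

lemma lsvBranch_one_le (hz1 : z ≤ 1) :
    lsvBranch hz k 1 ≤ (((k : ℝ) + 1) * (z / 2)) ^ (-(1 / z)) := by
  have hpow := Real.rpow_le_rpow_of_nonpos (by positivity) (lsvBranch_one_rpow_neg_ge hz k hz1)
    (neg_nonpos.2 (one_div_pos.2 hz).le)
  rwa [← Real.rpow_mul (lsvBranch_pos hz k zero_le_one).le, neg_mul_neg, mul_one_div_cancel hz.ne',
    Real.rpow_one] at hpow

lemma tendsto_lsvBranch_one (hz1 : z ≤ 1) :
    Tendsto (fun k => lsvBranch hz k 1) atTop (𝓝 0) :=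
  squeeze_zero (fun k => (lsvBranch_pos hz k zero_le_one).le) (fun k => lsvBranch_one_le hz k hz1)
    ((tendsto_rpow_neg_atTop (one_div_pos.2 hz)).comp ((tendsto_atTop_add_const_right _ _
      tendsto_natCast_atTop_atTop).atTop_mul_const (half_pos hz)))

lemma lsvWeight_pos (y : ℝ) : 0 < lsvWeight hz k y :=
  mul_pos (lsvLeftInvIterDeriv_pos hz k _) one_half_pos

lemma continuous_lsvWeight : Continuous (lsvWeight hz k) :=
  ((continuous_lsvLeftInvIterDeriv hz k).comp (by fun_prop)).mul continuous_const

lemma lsvWeight_le_exp_mul (hz1 : z ≤ 1) (hy : 0 ≤ y) (hy' : 0 ≤ y') :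
    lsvWeight hz k y ≤ Real.exp (2 * |y - y'|) * lsvWeight hz k y' := by
  have hdist := le_exp_mul_of_monotoneOn_sq_mul (fun s => (lsvLeftInvIterDeriv_pos hz k s).le)
    (antitoneOn_lsvLeftInvIterDeriv hz k) (monotoneOn_sq_mul_lsvLeftInvIterDeriv hz hz1 k)
    (s := (y + 1) / 2) (t := (y' + 1) / 2) (by linarith) (by linarith)
  have habs : 4 * |(y + 1) / 2 - (y' + 1) / 2| = 2 * |y - y'| := by
    rw [← _root_.sub_div, add_sub_add_right_eq_sub, abs_div, abs_two]
    ring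
  rw [habs] at hdist
  rw [lsvWeight, lsvWeight, ← mul_assoc]
  gcongr

lemma exists_lsvWeight_eq : ∃ c ∈ Ioo (0 : ℝ) 1,
    lsvWeight hz k c = 2 ^ z * lsvBranch hz (k + 1) 1 ^ (1 + z) := by
  obtain ⟨c, hc, hslope⟩ := exists_hasDerivAt_eq_slope (lsvBranch hz k) (lsvWeight hz k) one_pos
    (continuous_lsvBranch hz k).continuousOn fun y hy => hasDerivAt_lsvBranch hz k hy.1.le
  have hx := lsvBranch_pos hz (k + 1) zero_le_one
  refine ⟨c, hc, hslope.trans ?_⟩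
  rw [lsvBranch_apply_zero, ← lsvLeft_lsvBranch_succ hz k, lsvLeft_of_nonneg hx.le,
    Real.rpow_add hx, Real.rpow_one]
  ring

lemma lsvWeight_le (hz1 : z ≤ 1) (hy : y ∈ Icc (0 : ℝ) 1) :
    lsvWeight hz k y ≤
      Real.exp 2 * 2 ^ z * (z / 2) ^ (-(1 + 1 / z)) * ((k : ℝ) + 1) ^ (-(1 + 1 / z)) := by
  obtain ⟨c, hc, hcw⟩ := exists_lsvWeight_eq hz k
  have hyc : |y - c| ≤ 1 := abs_le.2 ⟨by linarith [hy.1, hc.2], by linarith [hy.2, hc.1]⟩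
  have hx : lsvBranch hz (k + 1) 1 ≤ (((k : ℝ) + 1) * (z / 2)) ^ (-(1 / z)) :=
    (antitone_lsvBranch hz zero_le_one k.le_succ).trans (lsvBranch_one_le hz k hz1)
  calc lsvWeight hz k y ≤ Real.exp (2 * |y - c|) * lsvWeight hz k c :=
        lsvWeight_le_exp_mul hz k hz1 hy.1 hc.1.le
    _ ≤ Real.exp (2 * 1) * (2 ^ z * ((((k : ℝ) + 1) * (z / 2)) ^ (-(1 / z))) ^ (1 + z)) := by
        rw [hcw]
        have := (lsvBranch_pos hz (k + 1) zero_le_one).le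
        gcongr
    _ = Real.exp 2 * 2 ^ z * (z / 2) ^ (-(1 + 1 / z)) * ((k : ℝ) + 1) ^ (-(1 + 1 / z)) := by
        have hexp : -(1 / z) * (1 + z) = -(1 + 1 / z) := by field_simp; ring
        rw [← Real.rpow_mul (by positivity), hexp, Real.mul_rpow (by positivity) (by positivity)]
        ring_nf

include hz in
lemma summable_sq_mul_rpow (hz2 : z < 1 / 2) :
    Summable fun k : ℕ => ((k : ℝ) + 1) ^ 2 * ((k : ℝ) + 1) ^ (-(1 + 1 / z)) := by
  have hexp : 1 - 1 / z < -1 := by linarith [(lt_div_iff₀ hz).2 (by linarith : 2 * z < 1)]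
  refine ((_root_.summable_nat_add_iff 1).2 (Real.summable_nat_rpow.2 hexp)).congr fun k => ?_
  rw [← Real.rpow_two, ← Real.rpow_add (by positivity)]
  push_cast
  ring_nf

lemma image_lsvBranch_Ioc :
    lsvBranch hz k '' Ioc 0 1 = Ioc (lsvBranch hz (k + 1) 1) (lsvBranch hz k 1) := by
  rw [← lsvBranch_apply_zero]
  exact ((strictMono_lsvBranch hz k).orderIsoOfSurjective _ (surjective_lsvBranch hz k)).image_Ioc
    0 1

lemma iUnion_Ioc_lsvBranch_one (hz1 : z ≤ 1) :
    ⋃ k, Ioc (lsvBranch hz (k + 1) 1) (lsvBranch hz k 1) = Ioc 0 1 := by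
  refine Subset.antisymm (iUnion_subset fun k => ?_) fun x hx => mem_iUnion.2 ?_
  · refine Ioc_subset_Ioc (lsvBranch_pos hz (k + 1) zero_le_one).le ?_
    exact (lsvBranch_le hz k zero_le_one).trans_eq (add_self_div_two 1)
  · have hex : ∃ k, lsvBranch hz (k + 1) 1 < x := (((tendsto_add_atTop_iff_nat 1).2
      (tendsto_lsvBranch_one hz hz1)).eventually (gt_mem_nhds hx.1)).exists
    classical
    refine ⟨Nat.find hex, Nat.find_spec hex, ?_⟩
    rcases hk : Nat.find hex with _ | k
    · exact hx.2.trans_eq (lsvBranch_zero_one hz).symm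
    · exact not_lt.1 (Nat.find_min hex (hk ▸ k.lt_succ_self))

lemma lintegral_Ioc_eq_tsum_lsvBranch (hz1 : z ≤ 1) (U : ℝ → ℝ≥0∞) : ∫⁻ x in Ioc 0 1, U x =
    ∑' k, ∫⁻ y in Ioc (0 : ℝ) 1, ENNReal.ofReal (lsvWeight hz k y) * U (lsvBranch hz k y) := by
  have hdisj : Pairwise (Function.onFun Disjoint fun k =>
      Ioc (lsvBranch hz (k + 1) 1) (lsvBranch hz k 1)) :=
    (antitone_lsvBranch hz zero_le_one).pairwise_disjoint_on_Ioc_succ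
  conv_lhs => rw [← iUnion_Ioc_lsvBranch_one hz hz1,
    lintegral_iUnion (fun _ => measurableSet_Ioc) hdisj]
  refine tsum_congr fun k => ?_
  rw [← image_lsvBranch_Ioc hz k, lintegral_image_eq_lintegral_abs_deriv_mul measurableSet_Ioc
    (fun y hy => (hasDerivAt_lsvBranch hz k hy.1.le).hasDerivWithinAt)
    (strictMono_lsvBranch hz k).injective.injOn]
  simp only [abs_of_pos (lsvWeight_pos hz k _)]

end Branches

section UnitInterval

open scoped unitInterval ENNReal

lemma measurable_sInf_nat {α : Type*} [MeasurableSpace α] {p : α → ℕ → Prop}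
    (hp : ∀ k, MeasurableSet {x | p x k}) : Measurable fun x => sInf {k | p x k} := by
  classical
  have hex (x : α) : ∃ k, p x k ∨ ∀ j, ¬p x j := by
    by_cases h : ∃ k, p x k
    · exact h.imp fun _ => Or.inl
    · exact ⟨0, Or.inr (not_exists.1 h)⟩
  have hnone : MeasurableSet {x | ∀ j, ¬p x j} := by
    rw [ofPred_forall]
    exact MeasurableSet.iInter fun j => (hp j).compl
  convert measurable_find hex fun k => (hp k).union hnone using 2 with x
  by_cases h : ∃ k, p x k
  · have hmin : IsLeast {k | p x k} (Nat.find (hex x)) :=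
      ⟨(Nat.find_spec (hex x)).resolve_right (not_forall_not.2 h),
        fun j hj => Nat.find_min' (hex x) (Or.inl hj)⟩
    exact hmin.csInf_eq
  · rw [(Nat.find_eq_zero (hex x)).2 (Or.inr (not_exists.1 h)), Nat.sInf_eq_zero]
    exact Or.inr (eq_empty_of_forall_notMem (not_exists.1 h))

lemma sInf_lt_succ_eq_of_antitone {α : Type*} [LinearOrder α] {x : ℕ → α} (hx : Antitone x) {k : ℕ}
    {t : α} (ht : t ∈ Ioc (x (k + 1)) (x k)) : sInf {j | x (j + 1) < t} = k :=
  IsLeast.csInf_eq ⟨ht.1, fun _ hj =>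
    not_lt.1 fun hjk => (hj.trans_le ht.2).not_ge (hx (Nat.succ_le_of_lt hjk))⟩

lemma lintegral_unitInterval (V : ℝ → ℝ≥0∞) : ∫⁻ x : I, V x = ∫⁻ x in Ioc (0 : ℝ) 1, V x := by
  rw [restrict_Ioc_eq_restrict_Icc]
  exact unitInterval.measurePreserving_coe.lintegral_comp_emb
    (MeasurableEmbedding.subtype_coe measurableSet_Icc) V

lemma ae_mem_Ioo_unitInterval : ∀ᵐ y : I, (y : ℝ) ∈ Ioo (0 : ℝ) 1 := by
  filter_upwards [compl_mem_ae_iff.2 (measure_singleton (0 : I)),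
    compl_mem_ae_iff.2 (measure_singleton (1 : I))] with y hy0 hy1
  exact ⟨unitInterval.pos_iff_ne_zero.2 hy0, unitInterval.lt_one_iff_ne_one.2 hy1⟩

variable {z : ℝ} {x : ℝ}

lemma measurable_lsv (z : ℝ) : Measurable (lsv z) :=
  Measurable.ite measurableSet_Iio (by fun_prop) (by fun_prop)

lemma lsv_of_lt_one_half (hx : 0 ≤ x) (hx2 : x < 1 / 2) : lsv z x = lsvLeft z x := by
  rw [lsv, if_pos hx2, lsvLeft_of_nonneg hx]

lemma lsv_of_one_half_le (hx : 1 / 2 ≤ x) : lsv z x = 2 * x - 1 :=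
  if_neg (not_lt.2 hx)

variable (hz : 0 < z)

include hz in
lemma mapsTo_lsv_Icc : MapsTo (lsv z) (Icc 0 1) (Icc 0 1) := by
  intro x hx
  rcases lt_or_ge x (1 / 2) with hx2 | hx2
  · rw [lsv_of_lt_one_half hx.1 hx2, ← lsvLeft_zero z, ← lsvLeft_one_half z]
    exact ⟨(strictMono_lsvLeft hz).monotone hx.1, (strictMono_lsvLeft hz).monotone hx2.le⟩
  · rw [lsv_of_one_half_le hx2]
    exact ⟨by linarith, by linarith [hx.2]⟩

lemma lsv_lsvBranch_zero {y : ℝ} (hy : 0 ≤ y) : lsv z (lsvBranch hz 0 y) = y := by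
  rw [lsvBranch_zero, lsv_of_one_half_le (by linarith)]
  ring

lemma lsv_lsvBranch_succ (k : ℕ) {y : ℝ} (hy : y ∈ Ico (0 : ℝ) 1) :
    lsv z (lsvBranch hz (k + 1) y) = lsvBranch hz k y := by
  rw [lsv_of_lt_one_half (lsvBranch_pos hz _ hy.1).le (lsvBranch_succ_lt hz k hy.2),
    lsvLeft_lsvBranch_succ]

lemma lsvBranch_mem_Icc (k : ℕ) {y : ℝ} (hy : y ∈ Icc (0 : ℝ) 1) :
    lsvBranch hz k y ∈ Icc (0 : ℝ) 1 :=
  ⟨(lsvBranch_pos hz k hy.1).le, (lsvBranch_le hz k hy.1).trans (by linarith [hy.2])⟩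

/-- The map `lsv z` as a self-map of the unit interval. -/
noncomputable def lsvUnit : I → I := (mapsTo_lsv_Icc hz).restrict

/-- The inducing height: `k` on the interval between the images of `1` under the branches `k + 1`
and `k`, and `0` (the infimum of the empty set) at the neutral fixed point. -/
noncomputable def lsvUnitHeight (x : I) : ℕ := sInf {k | lsvBranch hz (k + 1) 1 < x}

/-- The inverse branch `lsvBranch hz k` on the unit interval. -/
noncomputable def lsvUnitBranch (k : ℕ) : C(I, I) :=
  ⟨MapsTo.restrict (lsvBranch hz k) _ _ fun _ => lsvBranch_mem_Icc hz k,
    (continuous_lsvBranch hz k).restrict _⟩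

/-- The derivative `lsvWeight hz k` of the `k`-th inverse branch on the unit interval. -/
noncomputable def lsvUnitWeight (k : ℕ) : C(I, ℝ) :=
  ⟨fun y => lsvWeight hz k y, (continuous_lsvWeight hz k).comp continuous_subtype_val⟩

lemma measurable_lsvUnit : Measurable (lsvUnit hz) :=
  ((measurable_lsv z).comp measurable_subtype_coe).subtype_mk

lemma measurable_lsvUnitHeight : Measurable (lsvUnitHeight hz) :=
  measurable_sInf_nat fun _ => measurableSet_lt measurable_const measurable_subtype_coe

lemma lsvUnitHeight_lsvUnitBranch (k : ℕ) {y : I} (hy : (0 : ℝ) < y) :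
    lsvUnitHeight hz (lsvUnitBranch hz k y) = k :=
  sInf_lt_succ_eq_of_antitone (antitone_lsvBranch hz zero_le_one)
    ((image_lsvBranch_Ioc hz k).subset (mem_image_of_mem _ ⟨hy, y.2.2⟩))

lemma isLogHolder_lsvUnitWeight (hz1 : z ≤ 1) (k : ℕ) : IsLogHolder 2 1 (lsvUnitWeight hz k) where
  nonneg y := (lsvWeight_pos hz k y).le
  le_exp_mul y y' := by
    rw [Real.rpow_one]
    exact lsvWeight_le_exp_mul hz k hz1 y.2.1 y'.2.1

lemma summable_sq_mul_norm_lsvUnitWeight (hz2 : z < 1 / 2) :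
    Summable fun k : ℕ => ((k : ℝ) + 1) ^ 2 * ‖lsvUnitWeight hz k‖ := by
  refine .of_nonneg_of_le (fun k => by positivity) (fun k => ?_)
    ((summable_sq_mul_rpow hz hz2).mul_left (Real.exp 2 * 2 ^ z * (z / 2) ^ (-(1 + 1 / z))))
  rw [mul_left_comm]
  refine mul_le_mul_of_nonneg_left ((ContinuousMap.norm_le _ (by positivity)).2 fun y => ?_)
    (by positivity)
  exact (Real.norm_of_nonneg (lsvWeight_pos hz k y).le).trans_le
    (lsvWeight_le hz k (by linarith) y.2)

lemma lintegral_eq_tsum_lsvUnitBranch (hz1 : z ≤ 1) (U : I → ℝ≥0∞) :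
    ∫⁻ x, U x = ∑' k, ∫⁻ y, ENNReal.ofReal (lsvUnitWeight hz k y) * U (lsvUnitBranch hz k y) := by
  have hU (x : I) : U x = U (projIcc 0 1 zero_le_one x) := by rw [projIcc_val]
  simp only [fun k y => hU (lsvUnitBranch hz k y)]
  rw [lintegral_congr hU, lintegral_unitInterval fun x => U (projIcc 0 1 zero_le_one x),
    lintegral_Ioc_eq_tsum_lsvBranch hz hz1]
  exact tsum_congr fun k => (lintegral_unitInterval fun y => ENNReal.ofReal (lsvWeight hz k y) *
    U (projIcc 0 1 zero_le_one (lsvBranch hz k y))).symm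

lemma volume_eq_sum_map_densityMeasure_lsvUnitBranch (hz1 : z ≤ 1) : (volume : Measure I) =
    Measure.sum fun k => (densityMeasure volume (lsvUnitWeight hz k)).map (lsvUnitBranch hz k) := by
  refine Measure.ext_of_lintegral _ fun U hU => ?_
  rw [lintegral_eq_tsum_lsvUnitBranch hz hz1, lintegral_sum_measure]
  refine tsum_congr fun k => ?_
  rw [lintegral_map hU (lsvUnitBranch hz k).measurable, densityMeasure]
  exact (lintegral_withDensity_eq_lintegral_mul _ (lsvUnitWeight hz k).measurable.ennreal_ofReal
    (hU.comp (lsvUnitBranch hz k).measurable)).symm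

lemma isFullBranchSystem_lsvUnit (hz2 : z < 1 / 2) {r : ℝ} (hr : 0 < r) (hr1 : r ≤ 1) :
    IsFullBranchSystem volume (lsvUnit hz) (lsvUnitHeight hz) (lsvUnitBranch hz) (lsvUnitWeight hz)
      (1 / 2) 2 r where
  measurable_map := measurable_lsvUnit hz
  measurable_height := measurable_lsvUnitHeight hz
  dist_le_one x y := Real.dist_le_of_mem_Icc_01 x.2 y.2
  exponent_pos := hr
  exponent_le_one := hr1
  contraction_nonneg := by norm_num
  contraction_lt_one := by norm_num
  dist_branch_le k x y := abs_lsvBranch_sub_le hz k x.2.1 y.2.1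
  distortion_nonneg := zero_le_two
  isLogHolder_weight k := (isLogHolder_lsvUnitWeight hz (by linarith) k).anti_exponent
    (fun x y : I => Real.dist_le_of_mem_Icc_01 x.2 y.2) zero_le_two hr.le hr1
  summable_sq_mul_norm_weight := summable_sq_mul_norm_lsvUnitWeight hz hz2
  eq_sum_map_densityMeasure := volume_eq_sum_map_densityMeasure_lsvUnitBranch hz (by linarith)
  map_branch_zero := ae_of_all _ fun y => Subtype.ext (lsv_lsvBranch_zero hz y.2.1)
  map_branch_succ := ae_mem_Ioo_unitInterval.mono fun y hy k =>
    Subtype.ext (lsv_lsvBranch_succ hz k ⟨hy.1.le, hy.2⟩)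
  height_branch := ae_mem_Ioo_unitInterval.mono fun y hy k =>
    lsvUnitHeight_lsvUnitBranch hz k hy.1

end UnitInterval

section CentralLimit

open ProbabilityTheory
open scoped unitInterval Topology

lemma tendsto_integral_of_tendstoInDistribution {ι Ω E : Type*} [MeasurableSpace Ω]
    [TopologicalSpace E] [MeasurableSpace E] [OpensMeasurableSpace E]
    {ν : Measure Ω} [IsProbabilityMeasure ν] {γ : Measure E} [IsProbabilityMeasure γ]
    {X : ι → Ω → E} {l : Filter ι} (hX : TendstoInDistribution X l id (fun _ => ν) γ)
    (g : BoundedContinuousFunction E ℝ) :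
    Tendsto (fun i => ∫ x, g (X i x) ∂ν) l (𝓝 (∫ y, g y ∂γ)) := by
  have h := ProbabilityMeasure.tendsto_iff_forall_integral_tendsto.1 hX.tendsto g
  simp only [ProbabilityMeasure.coe_mk, Measure.map_id] at h
  refine h.congr fun i => ?_
  exact integral_map (hX.forall_aemeasurable i) g.continuous.aestronglyMeasurable

lemma absolutelyContinuous_restrict_of_measure_compl_eq_zero {α : Type*} [MeasurableSpace α]
    {μ ν : Measure α} {s : Set α} (hs : μ sᶜ = 0) (hμν : μ ≪ ν) : μ ≪ ν.restrict s := by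
  rw [← Measure.restrict_eq_self_of_ae_mem (s := s) (μ := μ) (compl_mem_ae_iff.1 (by simpa))]
  exact hμν.restrict s

lemma exists_ergodic_tendstoInDistribution_lsv {z : ℝ} (hz : z ∈ Ioo (0 : ℝ) (1 / 2))
    {φ : ℝ → ℝ} {C r : ℝ≥0} (hr : 0 < r) (hr1 : r ≤ 1) (hφ : HolderOnWith C r φ (Icc 0 1)) :
    ∃ (ν : Measure ℝ) (_ : IsProbabilityMeasure ν), Ergodic (lsv z) ν ∧
      volume.restrict (Icc 0 1) ≪ ν ∧ (∫ x, φ x ∂ν = 0 → ∃ v : ℝ≥0, TendstoInDistribution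
        (fun (n : ℕ) x => (√n)⁻¹ * lsvBirkhoff z φ n x) atTop id (fun _ => ν)
          (gaussianReal 0 v)) := by
  have hemb : MeasurableEmbedding (Subtype.val : I → ℝ) := .subtype_coe measurableSet_Icc
  let φI : C(I, ℝ) := ⟨fun y => φ y, continuousOn_iff_continuous_domRestrict.1 (hφ.continuousOn hr)⟩
  obtain ⟨ν, hν, herg, hac, hclt⟩ := (isFullBranchSystem_lsvUnit hz.1 hz.2 (r := r)
    (NNReal.coe_pos.2 hr) (NNReal.coe_le_one.2 hr1)).exists_ergodic_tendstoInDistribution (φ := φI)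
      C.2 fun x y => hφ.dist_le x.2 y.2
  have hsemi : Function.Semiconj (Subtype.val : I → ℝ) (lsvUnit hz.1) (lsv z) := fun _ => rfl
  have hνmap : IsProbabilityMeasure (ν.map (Subtype.val : I → ℝ)) :=
    Measure.isProbabilityMeasure_map measurable_subtype_coe.aemeasurable
  refine ⟨ν.map Subtype.val, hνmap,
    (measurable_subtype_coe.measurePreserving ν).ergodic_of_ergodic_semiconj herg
      (measurable_lsv z) hsemi, ?_, fun hmean => ?_⟩
  · rw [← unitInterval.measurePreserving_coe.map_eq]
    exact hac.map measurable_subtype_coe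
  · obtain ⟨v, hv⟩ := hclt (by rwa [hemb.integral_map] at hmean)
    have hΦ (n : ℕ) (y : I) : lsvBirkhoff z φ n y = birkhoffSum (lsvUnit hz.1) φI n y :=
      Finset.sum_congr rfl fun j _ => congrArg φ (hsemi.iterate_right j y).symm
    simp only [← hΦ] at hv
    exact ⟨v, tendstoInDistribution_map_of_comp
      (Y := fun (n : ℕ) x => (√n)⁻¹ * lsvBirkhoff z φ n x) measurable_subtype_coe.aemeasurable
      (fun n => hemb.aemeasurable_map_iff.2 (hv.forall_aemeasurable n)) hv⟩

end CentralLimit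

/-- For `z ∈ (0, 1/2)`, `μ` the unique absolutely continuous `f_z`-invariant
Borel probability measure on `[0,1]`, and `φ` Hölder with mean zero, the normalized Birkhoff
sums `n^{-1/2} Φ_n` converge in distribution (under `μ`) to a Gaussian `N(0, σ²)` for some
`σ ≥ 0`. Convergence in distribution is expressed by convergence of integrals of bounded
continuous test functions. -/
theorem lsv_central_limit_theorem
    (z : ℝ) (hz : z ∈ Set.Ioo (0 : ℝ) (1 / 2))
    (μ : Measure ℝ) (hμprob : IsProbabilityMeasure μ) (hμsupp : μ (Set.Icc (0 : ℝ) 1)ᶜ = 0)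
    (hμac : μ ≪ volume) (hμinv : MeasurePreserving (lsv z) μ μ)
    (φ : ℝ → ℝ) (hφ : ∃ C r : ℝ≥0, 0 < r ∧ r ≤ 1 ∧ HolderOnWith C r φ (Set.Icc (0 : ℝ) 1))
    (hmean : ∫ x, φ x ∂μ = 0) :
    ∃ σ : ℝ≥0, ∀ g : BoundedContinuousFunction ℝ ℝ,
      Tendsto (fun n : ℕ => ∫ x, g ((n : ℝ) ^ (-(1 / 2 : ℝ)) * lsvBirkhoff z φ n x) ∂μ)
        atTop (nhds (∫ y, g y ∂(ProbabilityTheory.gaussianReal 0 (σ ^ 2)))) := by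
  obtain ⟨C, r, hr, hr1, hHolder⟩ := hφ
  obtain ⟨ν, hν, herg, hac, hclt⟩ := exists_ergodic_tendstoInDistribution_lsv hz hr hr1 hHolder
  have hμν : μ ≪ ν := (absolutelyContinuous_restrict_of_measure_compl_eq_zero hμsupp hμac).trans hac
  obtain rfl : μ = ν := herg.eq_of_absolutelyContinuous hμinv hμν
  obtain ⟨v, hv⟩ := hclt hmean
  refine ⟨NNReal.sqrt v, fun g => ?_⟩
  rw [NNReal.sq_sqrt]
  simp only [Real.rpow_neg (Nat.cast_nonneg _), ← Real.sqrt_eq_rpow]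
  exact tendsto_integral_of_tendstoInDistribution hv g
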